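/- Let f ∈ L^1(-1,1) and g ∈ LlogL(-1,1) be such that f·T(gχ_A) ∈ L^1(-1,1) for every Borel set A ⊆ (-1,1). Then g·T(f) ∈ L^1(-1,1) and the Parseval formula ∫_{-1}^1 f T(g) = −∫_{-1}^1 g T(f) holds. -/

import Mathlib

open MeasureTheory Set Filter

noncomputable section

/-- Lebesgue measure restricted to the interval `(-1, 1)`. -/
def μI : Measure ℝ := volume.restrict (Set.Ioo (-1 : ℝ) 1)

/-- The finite Hilbert transform: the principal-value limit
`T(f)(t) = lim_{ε→0⁺} (1/π) ∫_{x∈(-1,1), |x-t|≥ε} f(x)/(x-t) dx`. -/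
def FHT (f : ℝ → ℂ) (t : ℝ) : ℂ :=
  limUnder (nhdsWithin (0 : ℝ) (Set.Ioi 0)) fun ε : ℝ =>
    (Real.pi : ℂ)⁻¹ *
      ∫ x in {x : ℝ | x ∈ Set.Ioo (-1 : ℝ) 1 ∧ ε ≤ |x - t|}, f x / ((x : ℂ) - (t : ℂ))

/-- The operator `T̂(g)(x) = -(1-x²)^{-1/2} T(t ↦ √(1-t²) g(t))(x)`. -/
def hatT (g : ℝ → ℂ) (x : ℝ) : ℂ :=
  -((Real.sqrt (1 - x ^ 2) : ℂ))⁻¹ * FHT (fun t => (Real.sqrt (1 - t ^ 2) : ℂ) * g t) x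

/-- Membership in the Zygmund space `L log L(-1,1)`:
`f` is a.e. measurable on `(-1,1)` and `∫ |f| log⁺|f| < ∞`. -/
def MemLlogL (f : ℝ → ℂ) : Prop :=
  AEStronglyMeasurable f μI ∧
    IntegrableOn (fun x => ‖f x‖ * max (Real.log ‖f x‖) 0) (Set.Ioo (-1 : ℝ) 1)

/-- The distribution function `λ ↦ |{x ∈ (-1,1) : |f(x)| > λ}|`. -/
def distFun (f : ℝ → ℂ) (lam : ℝ) : ℝ :=
  (volume {x : ℝ | x ∈ Set.Ioo (-1 : ℝ) 1 ∧ lam < ‖f x‖}).toReal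

/-- The decreasing rearrangement `f*` of `f`, a function on `(0,2)`. -/
def decRearr (f : ℝ → ℂ) (t : ℝ) : ℝ :=
  sInf {lam : ℝ | 0 ≤ lam ∧ distFun f lam ≤ t}

/-- The `L log L` norm `‖f‖ = ∫_0^2 f*(t) log(2e/t) dt`. -/
def llogLNorm (f : ℝ → ℂ) : ℝ :=
  ∫ t in Set.Ioo (0 : ℝ) 2, decRearr f t * Real.log (2 * Real.exp 1 / t)

/-- The `L(log L)^α` norm `∫_0^2 f*(t) log^α(2e/t) dt` (for `α = 0` this is the `L¹` norm). -/
def zygNorm (α : ℝ) (f : ℝ → ℂ) : ℝ :=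
  ∫ t in Set.Ioo (0 : ℝ) 2, decRearr f t * Real.log (2 * Real.exp 1 / t) ^ α

/-- Membership in the Zygmund space `L(log L)^α(-1,1)`. -/
def MemZyg (α : ℝ) (f : ℝ → ℂ) : Prop :=
  AEStronglyMeasurable f μI ∧
    IntegrableOn (fun t => decRearr f t * Real.log (2 * Real.exp 1 / t) ^ α)
      (Set.Ioo (0 : ℝ) 2)

/-- Membership in `L(log L)²(-1,1)`: `∫ |f| (log(2+|f|))² < ∞`. -/
def MemLlogL2 (f : ℝ → ℂ) : Prop :=
  AEStronglyMeasurable f μI ∧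
    IntegrableOn (fun x => ‖f x‖ * Real.log (2 + ‖f x‖) ^ 2) (Set.Ioo (-1 : ℝ) 1)

/-- The constant `c(β,γ) = max{1/(1-β), 1/(1-γ), 1/(β+γ-1)}`. -/
def cBG (β γ : ℝ) : ℝ := max (max (1 / (1 - β)) (1 / (1 - γ))) (1 / (β + γ - 1))

open scoped Topology

/-- Poisson kernel -/
def pk (x y t : ℝ) : ℝ := y / ((t - x) ^ 2 + y ^ 2)

lemma pk_eq {x y : ℝ} (hy : 0 < y) (t : ℝ) : pk x y t = y⁻¹ * (1 + ((t - x) / y) ^ 2)⁻¹ := by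
  unfold pk
  have : (t-x)^2 + y^2 ≠ 0 := by positivity
  have : 1 + ((t - x) / y) ^ 2 ≠ 0 := by positivity
  field_simp
  ring

lemma pk_nonneg {x y : ℝ} (hy : 0 < y) (t : ℝ) : 0 ≤ pk x y t := by
  unfold pk; positivity

lemma pk_integrable {x y : ℝ} (hy : 0 < y) : Integrable (pk x y) := by
  have h := (((integrable_inv_one_add_sq).comp_div hy.ne').comp_sub_right x).const_mul y⁻¹
  refine h.congr (Eventually.of_forall fun t => ?_)
  rw [pk_eq hy]

lemma pk_integral {x y : ℝ} (hy : 0 < y) : ∫ t, pk x y t = Real.pi := by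
  have : pk x y = fun t => y⁻¹ * (1 + ((t - x) / y) ^ 2)⁻¹ := funext (pk_eq hy)
  rw [this, integral_const_mul, integral_sub_right_eq_self (fun t => (1 + (t / y) ^ 2)⁻¹) x,
    Measure.integral_comp_div (fun t => (1 + t ^ 2)⁻¹) y, integral_univ_inv_one_add_sq, abs_of_pos hy]
  simp; field_simp

lemma integral_line_zero (Φ : ℂ → ℂ) {η C R0 : ℝ} (hη : 0 < η)
    (hd : DifferentiableOn ℂ Φ {z | -η < z.im})
    (hint : Integrable (fun t : ℝ => Φ t))
    (hb : ∀ z : ℂ, 0 ≤ z.im → R0 ≤ ‖z‖ → ‖Φ z‖ ≤ C / ‖z‖ ^ 2) :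
    ∫ t : ℝ, Φ t = 0 := by
  have h1 : Tendsto (fun R : ℝ => ∫ t in (-R)..R, Φ t) atTop (𝓝 (∫ t : ℝ, Φ t)) :=
    intervalIntegral_tendsto_integral hint tendsto_neg_atTop_atBot tendsto_id
  have h2 : Tendsto (fun R : ℝ => ∫ t in (-R)..R, Φ t) atTop (𝓝 0) := by
    have hC : Tendsto (fun R : ℝ => 4 * C / R) atTop (𝓝 0) := tendsto_const_nhds.div_atTop tendsto_id
    refine squeeze_zero_norm' ?_ hC
    filter_upwards [eventually_ge_atTop R0, eventually_gt_atTop 0] with R hR hR0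
    have hrect := Complex.integral_boundary_rect_eq_zero_of_differentiableOn Φ
      (-R : ℂ) (R + R * Complex.I) (hd.mono (by
        intro z hz
        have h := hz.2
        simp at h
        rw [uIcc_of_le hR0.le] at h
        have := h.1
        simp only [mem_ofPred_eq]
        linarith))
    have key : ∀ z : ℂ, 0 ≤ z.im → R ≤ ‖z‖ → ‖Φ z‖ ≤ C / R ^ 2 := by
      intro z hz hzR
      refine (hb z hz (hR.trans hzR)).trans ?_
      have hC0 : 0 ≤ C := by
        have := hb z hz (hR.trans hzR)
        have h3 : 0 ≤ C / ‖z‖^2 := (norm_nonneg _).trans this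
        have h4 : 0 < ‖z‖^2 := by have := hR0.trans_le hzR; positivity
        rcases div_nonneg_iff.1 h3 with h | h
        · exact h.1
        · linarith
      gcongr
    simp only [Complex.neg_re, Complex.ofReal_re, Complex.add_re, Complex.mul_re, Complex.I_re, mul_zero, Complex.ofReal_im, Complex.I_im, mul_one, sub_self, add_zero, Complex.neg_im, neg_zero, Complex.ofReal_zero, zero_mul, Complex.add_im, Complex.mul_im, zero_add] at hrect
    have e1 : ‖∫ x in (-R)..R, Φ (x + R * Complex.I)‖ ≤ C / R ^ 2 * |R - (-R)| := by
      apply intervalIntegral.norm_integral_le_of_norm_le_const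
      intro x _
      apply key
      · simp [hR0.le]
      · refine le_trans ?_ (Complex.abs_im_le_norm _)
        simp [abs_of_pos hR0]
    have e2 : ‖∫ y in (0:ℝ)..R, Φ (R + y * Complex.I)‖ ≤ C / R ^ 2 * |R - 0| := by
      apply intervalIntegral.norm_integral_le_of_norm_le_const
      intro y hy
      rw [uIoc_of_le hR0.le] at hy
      apply key
      · simp [hy.1.le]
      · refine le_trans ?_ (Complex.abs_re_le_norm _)
        simp [abs_of_pos hR0]
    have e3 : ‖∫ y in (0:ℝ)..R, Φ (((-R : ℝ):ℂ) + y * Complex.I)‖ ≤ C / R ^ 2 * |R - 0| := by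
      apply intervalIntegral.norm_integral_le_of_norm_le_const
      intro y hy
      rw [uIoc_of_le hR0.le] at hy
      apply key
      · simp [hy.1.le]
      · refine le_trans ?_ (Complex.abs_re_le_norm _)
        simp [abs_of_pos hR0]
    have e4 : ∫ t in (-R)..R, Φ t = (∫ x in (-R)..R, Φ (x + R * Complex.I)) - Complex.I • (∫ y in (0:ℝ)..R, Φ (R + y * Complex.I)) + Complex.I • ∫ y in (0:ℝ)..R, Φ (((-R : ℝ):ℂ) + y * Complex.I) := by
      linear_combination hrect
    rw [e4]
    refine (norm_add_le _ _).trans ?_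
    refine (add_le_add_left (norm_sub_le _ _) _).trans ?_
    rw [norm_smul, norm_smul, Complex.norm_I, one_mul, one_mul]
    have e5 : C / R ^ 2 * |R - (-R)| + C / R ^ 2 * |R - 0| + C / R ^ 2 * |R - 0| = 4 * C / R := by
      rw [abs_of_pos (by linarith), abs_of_pos (by linarith)]
      field_simp; ring
    linarith
  exact tendsto_nhds_unique h1 h2

lemma poisson_formula (H : ℂ → ℂ) {η M : ℝ} (hη : 0 < η)
    (hd : DifferentiableOn ℂ H {z | -η < z.im})
    (hM : ∀ z : ℂ, 0 ≤ z.im → ‖H z‖ ≤ M) {x y : ℝ} (hy : 0 < y) :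
    Integrable (fun t : ℝ => H t * (pk x y t : ℂ)) ∧
    ∫ t : ℝ, H t * (pk x y t : ℂ) = Real.pi * H (x + y * Complex.I) := by
  have hcont : Continuous (fun t : ℝ => H t) := by
    rw [← continuousOn_univ]
    refine hd.continuousOn.comp Complex.continuous_ofReal.continuousOn ?_
    intro t _; simp [hη]
  have hi1 : Integrable (fun t : ℝ => H t * (pk x y t : ℂ)) := by
    refine ((pk_integrable (x := x) hy).ofReal (𝕜 := ℂ)).bdd_mul (c := M) hcont.aestronglyMeasurable ?_
    exact Eventually.of_forall fun t => hM _ (by simp)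
  refine ⟨hi1, ?_⟩
  set w : ℂ := x + y * Complex.I with hw
  set w' : ℂ := x - y * Complex.I with hw'
  have hwim : w.im = y := by simp [hw]
  have hw'im : w'.im = -y := by simp [hw']
  set Φ : ℂ → ℂ := fun z => dslope H w z * (1 / (z - w')) with hΦ
  have hw0 : ∀ z : ℂ, -y < z.im → z - w' ≠ 0 := by
    intro z hz h
    have : z = w' := sub_eq_zero.1 h
    rw [this, hw'im] at hz
    exact lt_irrefl _ hz
  have hopen : IsOpen {z : ℂ | -η < z.im} := isOpen_lt continuous_const Complex.continuous_im
  have hds : DifferentiableOn ℂ (dslope H w) {z | -η < z.im} := by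
    refine (Complex.differentiableOn_dslope (hopen.mem_nhds ?_)).2 hd
    simp [hwim]; linarith
  have hΦd : DifferentiableOn ℂ Φ {z | -(min η y) < z.im} := by
    refine (hds.mono ?_).mul ?_
    · intro z hz; have := min_le_left η y; simp only [mem_ofPred_eq] at *; linarith
    · refine DifferentiableOn.div (differentiableOn_const _) (by fun_prop) ?_
      intro z hz; apply hw0; have := min_le_right η y; simp only [mem_ofPred_eq] at *; linarith
  have hreal : ∀ t : ℝ, Φ t = (H t * (pk x y t : ℂ) - H w * (pk x y t : ℂ)) * (y : ℂ)⁻¹ := by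
    intro t
    have hne : (t : ℂ) ≠ w := by
      intro h
      have := congrArg Complex.im h
      rw [hwim] at this; simp at this; linarith
    have h1 : (t : ℂ) - w' ≠ 0 := hw0 _ (by simp [hy])
    have h2 : (t : ℂ) - w ≠ 0 := sub_ne_zero.2 hne
    have h3 : ((t : ℂ) - w) * (t - w') = (t - x) ^ 2 + y ^ 2 := by
      rw [hw, hw']; ring_nf; rw [Complex.I_sq]; ring
    have h4 : ((t - x : ℂ)) ^ 2 + y ^ 2 ≠ 0 := by rw [← h3]; exact mul_ne_zero h2 h1
    have hyc : (y : ℂ) ≠ 0 := by exact_mod_cast hy.ne'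
    rw [hΦ]
    simp only
    rw [dslope_of_ne _ hne, slope_def_field]
    unfold pk
    push_cast
    rw [div_mul_div_comm, h3]
    field_simp
  have hi2 : Integrable (fun t : ℝ => H w * (pk x y t : ℂ)) :=
    ((pk_integrable (x := x) hy).ofReal (𝕜 := ℂ)).const_mul _
  have hz := integral_line_zero Φ (η := min η y) (C := 8 * M) (R0 := 2 * ‖w‖) (lt_min hη hy) hΦd
    (by
      simp_rw [hreal]
      exact (hi1.sub hi2).mul_const _) ?_
  · simp_rw [hreal] at hz
    rw [integral_mul_const, integral_sub hi1 hi2, integral_const_mul] at hz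
    have hyc : (y : ℂ)⁻¹ ≠ 0 := inv_ne_zero (by exact_mod_cast hy.ne')
    have := (mul_eq_zero.1 hz).resolve_right hyc
    have e : ∫ t, (pk x y t : ℂ) = Real.pi := by
      rw [integral_complex_ofReal, pk_integral hy]
    rw [e] at this
    linear_combination this
  · intro z hz hzR
    have hwpos : 0 < ‖w‖ := by
      rw [norm_pos_iff]; intro h; rw [h] at hwim; simp at hwim; linarith
    have hnw : ‖w'‖ = ‖w‖ := by
      have : w' = (starRingEnd ℂ) w := by simp [hw, hw', sub_eq_add_neg]
      rw [this, Complex.norm_conj]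
    have hne : z ≠ w := by
      intro h; rw [h] at hzR; linarith
    have a1 : ‖z‖ / 2 ≤ ‖z - w‖ := by
      have := norm_sub_norm_le z w; linarith
    have a2 : ‖z‖ / 2 ≤ ‖z - w'‖ := by
      have := norm_sub_norm_le z w'; linarith
    have hzp : 0 < ‖z‖ := by linarith
    rw [hΦ]
    simp only
    rw [dslope_of_ne _ hne, slope_def_field, div_mul_div_comm, norm_div, norm_mul, norm_mul, norm_one, mul_one]
    have hM0 : 0 ≤ M := (norm_nonneg _).trans (hM z hz)
    calc ‖H z - H w‖ / (‖z - w‖ * ‖z - w'‖) ≤ (M + M) / ((‖z‖ / 2) * (‖z‖ / 2)) := by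
          gcongr
          refine (norm_sub_le _ _).trans (add_le_add (hM z hz) (hM w (by rw [hwim]; exact hy.le)))
      _ = 8 * M / ‖z‖ ^ 2 := by field_simp; ring

instance : IsFiniteMeasure μI := by unfold μI; infer_instance

lemma re_bound (H : ℂ → ℂ) {η M : ℝ} (hη : 0 < η)
    (hd : DifferentiableOn ℂ H {z | -η < z.im})
    (hM : ∀ z : ℂ, 0 ≤ z.im → ‖H z‖ ≤ M) (hre : ∀ t : ℝ, 0 ≤ (H t).re) :
    ∫⁻ t : ℝ, ENNReal.ofReal (H t).re ∂μI ≤ ENNReal.ofReal (2 * Real.pi * (H Complex.I).re) := by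
  obtain ⟨hi, he⟩ := poisson_formula H hη hd hM (x := 0) (y := 1) one_pos
  have h1 : Integrable (fun t : ℝ => (H t).re * pk 0 1 t) := by
    have := hi.re
    refine this.congr (Eventually.of_forall fun t => ?_)
    simp
  have h2 : ∫ t : ℝ, (H t).re * pk 0 1 t = Real.pi * (H Complex.I).re := by
    have h3 := integral_re hi
    simp only [RCLike.re_eq_complex_re, Complex.re_mul_ofReal] at h3
    rw [h3, he]
    simp
  calc ∫⁻ t : ℝ, ENNReal.ofReal (H t).re ∂μI
      ≤ ∫⁻ t : ℝ, ENNReal.ofReal (2 * ((H t).re * pk 0 1 t)) ∂μI := by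
        unfold μI
        refine setLIntegral_mono' measurableSet_Ioo fun t ht => ENNReal.ofReal_le_ofReal ?_
        have : 1 / 2 ≤ pk 0 1 t := by
          unfold pk
          rw [div_le_div_iff₀ (by norm_num) (by positivity)]
          nlinarith [ht.1, ht.2]
        nlinarith [hre t]
    _ ≤ ∫⁻ t : ℝ, ENNReal.ofReal (2 * ((H t).re * pk 0 1 t)) :=
        setLIntegral_le_lintegral _ _
    _ = ENNReal.ofReal (∫ t : ℝ, 2 * ((H t).re * pk 0 1 t)) := by
        rw [ofReal_integral_eq_lintegral_ofReal (h1.const_mul 2)]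
        exact Eventually.of_forall fun t => mul_nonneg zero_le_two (mul_nonneg (hre t) (pk_nonneg one_pos t))
    _ = _ := by rw [integral_const_mul, h2, mul_assoc]

/-- Cauchy transform of a real function. -/
def CT (u : ℝ → ℝ) (z : ℂ) : ℂ := ∫ x, (u x : ℂ) / ((x : ℂ) - z) ∂μI

/-- Conjugate Poisson integral. -/
def qr (ε : ℝ) (u : ℝ → ℝ) (t : ℝ) : ℝ := ∫ x, u x * ((x - t) / ((x - t) ^ 2 + ε ^ 2)) ∂μI

lemma norm_sub_ge (x : ℝ) (z : ℂ) : |z.im| ≤ ‖(x : ℂ) - z‖ := by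
  have := Complex.abs_im_le_norm ((x : ℂ) - z)
  simpa using this

lemma CT_meas {u : ℝ → ℝ} (hu : Integrable u μI) (z : ℂ) :
    AEStronglyMeasurable (fun x : ℝ => (u x : ℂ) / ((x : ℂ) - z)) μI := by
  have h1 : AEStronglyMeasurable (fun x => (u x : ℂ)) μI :=
    Complex.continuous_ofReal.comp_aestronglyMeasurable hu.aestronglyMeasurable
  exact h1.div₀ (by fun_prop) 

lemma CT_int {u : ℝ → ℝ} (hu : Integrable u μI) {z : ℂ} (hz : 0 < z.im) :
    Integrable (fun x : ℝ => (u x : ℂ) / ((x : ℂ) - z)) μI := by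
  refine Integrable.mono' (hu.abs.div_const z.im) (CT_meas hu z) (Eventually.of_forall fun x => ?_)
  rw [norm_div, Complex.norm_real, Real.norm_eq_abs]
  have := norm_sub_ge x z
  rw [abs_of_pos hz] at this
  gcongr

lemma CT_bound {u : ℝ → ℝ} (hu : Integrable u μI) {z : ℂ} (hz : 0 < z.im) :
    ‖CT u z‖ ≤ (∫ x, |u x| ∂μI) / z.im := by
  unfold CT
  rw [← integral_div]
  refine norm_integral_le_of_norm_le (hu.abs.div_const z.im) (Eventually.of_forall fun x => ?_)
  rw [norm_div, Complex.norm_real, Real.norm_eq_abs]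
  have := norm_sub_ge x z
  rw [abs_of_pos hz] at this
  gcongr

lemma CT_diff {u : ℝ → ℝ} (hu : Integrable u μI) : DifferentiableOn ℂ (CT u) {z | 0 < z.im} := by
  intro z hz
  simp only [mem_ofPred_eq] at hz
  have hopen : IsOpen {w : ℂ | z.im / 2 < w.im} := isOpen_lt continuous_const Complex.continuous_im
  have hs : {w : ℂ | z.im / 2 < w.im} ∈ 𝓝 z := hopen.mem_nhds (by simp only [mem_ofPred_eq]; linarith)
  have := (hasDerivAt_integral_of_dominated_loc_of_deriv_le (μ := μI) (𝕜 := ℂ)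
    (F := fun w x => (u x : ℂ) / ((x : ℂ) - w)) (F' := fun w x => (u x : ℂ) / ((x : ℂ) - w) ^ 2)
    (x₀ := z) (bound := fun x => |u x| / (z.im / 2) ^ 2) hs
    (Eventually.of_forall fun w => CT_meas hu w) (CT_int hu hz) ?_ ?_ (hu.abs.div_const _) ?_).2
  · exact this.differentiableAt.differentiableWithinAt
  · have h1 : AEStronglyMeasurable (fun x => (u x : ℂ)) μI :=
      Complex.continuous_ofReal.comp_aestronglyMeasurable hu.aestronglyMeasurable
    exact h1.div₀ (by fun_prop)
  · refine Eventually.of_forall fun x w hw => ?_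
    simp only [mem_ofPred_eq] at hw
    rw [norm_div, Complex.norm_real, Real.norm_eq_abs, norm_pow]
    have := norm_sub_ge x w
    rw [abs_of_pos (by linarith)] at this
    have : z.im / 2 ≤ ‖(x : ℂ) - w‖ := by linarith
    gcongr
  · refine Eventually.of_forall fun x w hw => ?_
    simp only [mem_ofPred_eq] at hw
    have hne : (x : ℂ) - w ≠ 0 := by
      intro h
      have := norm_sub_ge x w
      rw [h, norm_zero, abs_of_pos (by linarith)] at this
      linarith
    have h1 : HasDerivAt (fun w : ℂ => (x : ℂ) - w) (-1) w := by
      simpa using (hasDerivAt_id w).const_sub (x : ℂ)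
    have h2 := (h1.inv hne).const_mul (u x : ℂ)
    simp only [neg_neg] at h2
    have e : (u x : ℂ) / ((x : ℂ) - w) ^ 2 = u x * (1 / ((x : ℂ) - w) ^ 2) := by ring
    rw [e]
    exact h2

lemma CT_kernel_re (x t ε : ℝ) (a : ℝ) :
    ((a : ℂ) / ((x : ℂ) - (t + ε * Complex.I))).re = a * ((x - t) / ((x - t) ^ 2 + ε ^ 2)) := by
  have hn : Complex.normSq ((x : ℂ) - (t + ε * Complex.I)) = (x - t)^2 + ε^2 := by
    simp [Complex.normSq_apply]; ring
  rw [Complex.div_re, hn]; simp; ring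

lemma CT_kernel_im (x t ε : ℝ) (a : ℝ) :
    ((a : ℂ) / ((x : ℂ) - (t + ε * Complex.I))).im = a * pk t ε x := by
  have hn : Complex.normSq ((x : ℂ) - (t + ε * Complex.I)) = (x - t)^2 + ε^2 := by
    simp [Complex.normSq_apply]; ring
  rw [Complex.div_im, hn]; simp [pk]; ring

lemma CT_re {u : ℝ → ℝ} (hu : Integrable u μI) (t : ℝ) {ε : ℝ} (hε : 0 < ε) :
    (CT u (t + ε * Complex.I)).re = qr ε u t := by
  have h := integral_re (CT_int hu (z := t + ε * Complex.I) (by simpa using hε))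
  unfold CT qr
  simp only [RCLike.re_eq_complex_re] at h
  rw [← h]
  congr 1; ext x
  rw [CT_kernel_re]

lemma CT_im {u : ℝ → ℝ} (hu : Integrable u μI) (t : ℝ) {ε : ℝ} (hε : 0 < ε) :
    (CT u (t + ε * Complex.I)).im = ∫ x, u x * pk t ε x ∂μI := by
  have h := integral_im (CT_int hu (z := t + ε * Complex.I) (by simpa using hε))
  unfold CT
  simp only [RCLike.im_eq_complex_im] at h
  rw [← h]
  congr 1; ext x
  rw [CT_kernel_im]

lemma CT_im_nonneg {u : ℝ → ℝ} (hu : Integrable u μI) (h0 : ∀ x, 0 ≤ u x) {z : ℂ} (hz : 0 < z.im) :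
    0 ≤ (CT u z).im := by
  have := CT_im hu z.re hz
  rw [Complex.re_add_im] at this
  rw [this]
  exact integral_nonneg fun x => mul_nonneg (h0 x) (pk_nonneg hz x)

lemma CT_im_le {u : ℝ → ℝ} (hu : Integrable u μI) (h0 : ∀ x, |u x| ≤ 1) {z : ℂ} (hz : 0 < z.im) :
    |(CT u z).im| ≤ Real.pi := by
  have := CT_im hu z.re hz
  rw [Complex.re_add_im] at this
  rw [this, ← pk_integral (x := z.re) hz, ← Real.norm_eq_abs]
  calc ‖∫ x, u x * pk z.re z.im x ∂μI‖ ≤ ∫ x, pk z.re z.im x ∂μI := by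
        refine norm_integral_le_of_norm_le (pk_integrable hz).integrableOn (Eventually.of_forall fun x => ?_)
        rw [norm_mul, Real.norm_eq_abs, Real.norm_eq_abs, abs_of_nonneg (pk_nonneg hz x)]
        have := pk_nonneg (x := z.re) hz x
        nlinarith [h0 x]
    _ ≤ _ := setIntegral_le_integral (pk_integrable hz) (Eventually.of_forall fun x => pk_nonneg hz x)

lemma shift_diff {G : ℂ → ℂ} (hG : DifferentiableOn ℂ G {z | 0 < z.im}) (δ : ℝ) :
    DifferentiableOn ℂ (fun z => G (z + δ * Complex.I)) {z | -δ < z.im} := by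
  refine hG.comp (by fun_prop) ?_
  intro z hz
  simp only [mem_ofPred_eq] at *
  simp; linarith

lemma E1 {u : ℝ → ℝ} (hu : Integrable u μI) (h0 : ∀ x, 0 ≤ u x) {δ : ℝ} (hδ : 0 < δ) :
    ∫⁻ t : ℝ, ENNReal.ofReal (Real.log ‖1 - Complex.I * CT u (t + δ * Complex.I)‖) ∂μI
      ≤ ENNReal.ofReal (2 * Real.pi * ∫ x, u x ∂μI) := by
  have hre : ∀ z : ℂ, 0 < z.im → 1 ≤ (1 - Complex.I * CT u z).re := by
    intro z hz
    have := CT_im_nonneg hu h0 hz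
    simpa using this
  have hn : ∀ z : ℂ, 0 < z.im → 1 ≤ ‖1 - Complex.I * CT u z‖ := fun z hz =>
    (hre z hz).trans (Complex.re_le_norm _)
  have habs : ∫ x, |u x| ∂μI = ∫ x, u x ∂μI := by
    congr 1; ext x; exact abs_of_nonneg (h0 x)
  have hup : ∀ z : ℂ, 0 < z.im → ‖1 - Complex.I * CT u z‖ ≤ 1 + (∫ x, u x ∂μI) / z.im := by
    intro z hz
    refine (norm_sub_le _ _).trans ?_
    have := CT_bound hu hz
    rw [habs] at this
    simpa using this
  have hI0 : 0 ≤ ∫ x, u x ∂μI := integral_nonneg h0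
  set G : ℂ → ℂ := fun z => Complex.log (1 - Complex.I * CT u z) with hGd
  have hG : DifferentiableOn ℂ G {z | 0 < z.im} := by
    refine DifferentiableOn.clog ((differentiableOn_const _).sub ((differentiableOn_const _).mul (CT_diff hu))) ?_
    intro z hz
    exact Or.inl (lt_of_lt_of_le one_pos (hre z hz))
  have hshift : ∀ z : ℂ, (z + δ * Complex.I).im = z.im + δ := by intro z; simp
  have := re_bound (fun z => G (z + δ * Complex.I)) (η := δ)
    (M := Real.log (1 + (∫ x, u x ∂μI) / δ) + Real.pi) hδ (shift_diff hG δ) ?_ ?_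
  · simp only [hGd, Complex.log_re] at this
    refine this.trans (ENNReal.ofReal_le_ofReal ?_)
    gcongr
    have h1 := hup (Complex.I + δ * Complex.I) (by rw [hshift]; simp; linarith)
    have h2 := hn (Complex.I + δ * Complex.I) (by rw [hshift]; simp; linarith)
    refine (Real.log_le_sub_one_of_pos (by linarith)).trans ?_
    rw [hshift] at h1
    have h3 : (∫ x, u x ∂μI) / (Complex.I.im + δ) ≤ ∫ x, u x ∂μI := by
      apply div_le_self hI0; simp; linarith
    linarith
  · intro z hz
    have hz' : 0 < (z + δ * Complex.I).im := by rw [hshift]; linarith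
    refine (Complex.norm_le_abs_re_add_abs_im _).trans ?_
    simp only [hGd, Complex.log_re, Complex.log_im]
    refine add_le_add ?_ (Complex.abs_arg_le_pi _)
    rw [abs_of_nonneg (Real.log_nonneg (hn _ hz'))]
    have := hn _ hz'
    refine Real.log_le_log (by linarith) ((hup _ hz').trans ?_)
    rw [hshift]
    gcongr
    linarith
  · intro t
    simp only [hGd, Complex.log_re]
    exact Real.log_nonneg (hn _ (by rw [hshift]; simpa using hδ))

/-- the universal constant -/
def C2 : ℝ := 2 * (2 * Real.pi * Real.exp 1)

lemma E2 {u : ℝ → ℝ} (hu : Integrable u μI) (h0 : ∀ x, |u x| ≤ 1) {δ : ℝ} (hδ : 0 < δ) :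
    ∫⁻ t : ℝ, ENNReal.ofReal (Real.exp (qr δ u t / 4)) ∂μI ≤ ENNReal.ofReal C2 := by
  set G : ℂ → ℂ := fun z => Complex.exp (CT u z / 4) with hGd
  have hG : DifferentiableOn ℂ G {z | 0 < z.im} := ((CT_diff hu).div_const 4).cexp
  have hshift : ∀ z : ℂ, (z + δ * Complex.I).im = z.im + δ := by intro z; simp
  have h1 : ∫ x, |u x| ∂μI ≤ 2 := by
    calc ∫ x, |u x| ∂μI ≤ ∫ x, (1:ℝ) ∂μI := integral_mono hu.abs (integrable_const _) h0
      _ = 2 := by simp [μI, measureReal_def]; norm_num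
  have hb : ∀ z : ℂ, 0 < z.im → ‖CT u z‖ ≤ 2 / z.im := fun z hz =>
    (CT_bound hu hz).trans (by gcongr)
  have hnG : ∀ z : ℂ, ‖G z‖ = Real.exp ((CT u z).re / 4) := by
    intro z
    simp only [hGd, Complex.norm_exp]
    congr 1
    simp
  have hreG : ∀ z : ℂ, 0 < z.im → Real.exp ((CT u z).re / 4) ≤ 2 * (G z).re := by
    intro z hz
    simp only [hGd, Complex.exp_re]
    have e1 : (CT u z / 4).re = (CT u z).re / 4 := by simp
    have e2 : (CT u z / 4).im = (CT u z).im / 4 := by simp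
    rw [e1, e2]
    have h3 : 1 / 2 ≤ Real.cos ((CT u z).im / 4) := by
      rw [← Real.cos_pi_div_three, ← Real.cos_abs ((CT u z).im / 4)]
      have := CT_im_le hu h0 hz
      apply Real.cos_le_cos_of_nonneg_of_le_pi (abs_nonneg _)
      · linarith [Real.pi_pos]
      · rw [abs_div, abs_of_pos (by norm_num : (0:ℝ) < 4)]; linarith [Real.pi_pos]
    have := Real.exp_pos ((CT u z).re / 4)
    nlinarith
  have := re_bound (fun z => G (z + δ * Complex.I)) (η := δ)
    (M := Real.exp (2 / δ)) hδ (shift_diff hG δ) ?_ ?_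
  · calc ∫⁻ t : ℝ, ENNReal.ofReal (Real.exp (qr δ u t / 4)) ∂μI
        ≤ ∫⁻ t : ℝ, 2 * ENNReal.ofReal (G (t + δ * Complex.I)).re ∂μI := by
          refine lintegral_mono fun t => ?_
          have h2 : (2 : ENNReal) = ENNReal.ofReal 2 := by simp
          rw [← CT_re hu t hδ, h2, ← ENNReal.ofReal_mul (by norm_num)]
          exact ENNReal.ofReal_le_ofReal (hreG _ (by simpa using hδ))
      _ ≤ 2 * ENNReal.ofReal (2 * Real.pi * (G (Complex.I + δ * Complex.I)).re) := by
          rw [lintegral_const_mul' _ _ (by simp)]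
          gcongr
      _ ≤ _ := by
          have h2 : (2 : ENNReal) = ENNReal.ofReal 2 := by simp
          rw [h2, ← ENNReal.ofReal_mul (by norm_num)]
          apply ENNReal.ofReal_le_ofReal
          unfold C2
          gcongr
          refine (Complex.re_le_norm _).trans ?_
          rw [hnG]
          apply Real.exp_le_exp.2
          have h4 := hb (Complex.I + δ * Complex.I) (by rw [hshift]; simp; linarith)
          rw [hshift] at h4
          have h5 : 2 / (Complex.I.im + δ) ≤ 2 := by
            apply div_le_self (by norm_num); simp; linarith
          have := Complex.re_le_norm (CT u (Complex.I + δ * Complex.I))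
          linarith
  · intro z hz
    have hz' : 0 < (z + δ * Complex.I).im := by rw [hshift]; linarith
    rw [hnG]
    apply Real.exp_le_exp.2
    have h4 := hb _ hz'
    have h5 : 2 / (z + δ * Complex.I).im ≤ 2 / δ := by
      rw [hshift]; gcongr; linarith
    have := Complex.re_le_norm (CT u (z + δ * Complex.I))
    have : 0 < 2 / δ := by positivity
    linarith
  · intro t
    have := hreG (t + δ * Complex.I) (by simpa using hδ)
    have := Real.exp_pos ((CT u (t + δ * Complex.I)).re / 4)
    linarith

lemma kb (r : ℝ) : |r| * |2 * r / (1 + r ^ 2) ^ 2| ≤ 2 * (1 + r ^ 2)⁻¹ := by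
  rw [← abs_mul, show r * (2 * r / (1 + r ^ 2) ^ 2) = 2 * (r^2 / (1+r^2)^2) by ring]
  rw [abs_of_nonneg (by positivity)]
  have : r ^ 2 / (1 + r ^ 2) ^ 2 ≤ (1 + r^2)⁻¹ := by
    rw [div_le_iff₀ (by positivity)]
    rw [show (1 + r^2)⁻¹ * (1 + r^2)^2 = 1 + r^2 by field_simp]
    linarith
  linarith

lemma tendsto_aux (M : ℝ) (l : Filter ℝ) (hl : Tendsto (fun r : ℝ => |r|) l atTop) :
    Tendsto (fun r : ℝ => M * |r| * (1 + r ^ 2)⁻¹) l (𝓝 0) := by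
  have h1 : Tendsto (fun r : ℝ => |M| * |r|⁻¹) l (𝓝 0) := by
    simpa using (tendsto_inv_atTop_zero.comp hl).const_mul |M|
  refine squeeze_zero_norm' ?_ h1
  filter_upwards [hl.eventually_gt_atTop 0] with r hr
  rw [norm_mul, norm_mul, norm_inv, Real.norm_eq_abs, Real.norm_eq_abs, abs_abs, Real.norm_eq_abs,
    abs_of_pos (by positivity : 0 < 1 + r^2), mul_assoc]
  refine mul_le_mul_of_nonneg_left ?_ (abs_nonneg _)
  rw [← div_eq_mul_inv, div_le_iff₀ (by positivity), inv_mul_eq_div, le_div_iff₀ hr]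
  nlinarith [sq_abs r]

lemma lip_repr {φ φ' : ℝ → ℂ} {M : ℝ} (hφ : ∀ r, HasDerivAt φ (φ' r) r) (hc : Continuous φ')
    (hM : ∀ r, ‖φ' r‖ ≤ M) (hb : ∀ r, ‖φ r‖ ≤ M * |r|) :
    ∫ r : ℝ, φ' r * (((1 + r ^ 2)⁻¹ : ℝ) : ℂ) = ∫ r : ℝ, φ r * ((2 * r / (1 + r ^ 2) ^ 2 : ℝ) : ℂ) := by
  have hv : ∀ r : ℝ, HasDerivAt (fun r : ℝ => (((1 + r ^ 2)⁻¹ : ℝ) : ℂ)) ((-(2 * r / (1 + r ^ 2) ^ 2) : ℝ) : ℂ) r := by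
    intro r
    apply HasDerivAt.ofReal_comp
    have h1 : HasDerivAt (fun r : ℝ => 1 + r ^ 2) (2 * r) r := by
      simpa using ((hasDerivAt_id r).pow 2).const_add 1
    have h2 := h1.inv (by positivity)
    rw [show -(2 * r / (1 + r ^ 2) ^ 2) = -(2 * r) / (1 + r ^ 2) ^ 2 by ring]
    exact h2
  have hi : Integrable (fun r : ℝ => M * (2 * (1 + r ^ 2)⁻¹)) :=
    (integrable_inv_one_add_sq.const_mul 2).const_mul M
  have hM0 : 0 ≤ M := (norm_nonneg _).trans (hM 0)
  have hφc : Continuous φ := continuous_iff_continuousAt.2 fun r => (hφ r).continuousAt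
  have hvc : Continuous (fun r : ℝ => (((1 + r ^ 2)⁻¹ : ℝ) : ℂ)) :=
    continuous_iff_continuousAt.2 fun r => (hv r).continuousAt
  have hkc : Continuous (fun r : ℝ => ((-(2 * r / (1 + r ^ 2) ^ 2) : ℝ) : ℂ)) := by
    refine Complex.continuous_ofReal.comp ?_
    refine Continuous.neg (Continuous.div (by fun_prop) (by fun_prop) ?_)
    intro r; positivity
  have hn1 : ∀ r : ℝ, ‖((-(2 * r / (1 + r ^ 2) ^ 2) : ℝ) : ℂ)‖ = |2 * r / (1 + r ^ 2) ^ 2| := by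
    intro r; rw [Complex.norm_real, Real.norm_eq_abs, abs_neg]
  have hn2 : ∀ r : ℝ, ‖(((1 + r ^ 2)⁻¹ : ℝ) : ℂ)‖ = (1 + r ^ 2)⁻¹ := by
    intro r; rw [Complex.norm_real, Real.norm_eq_abs, abs_of_nonneg (by positivity)]
  have hb2 : ∀ r, ‖φ r * (((1 + r ^ 2)⁻¹ : ℝ) : ℂ)‖ ≤ M * |r| * (1 + r ^ 2)⁻¹ := by
    intro r
    rw [norm_mul, hn2]
    exact mul_le_mul_of_nonneg_right (hb r) (by positivity)
  have key := integral_mul_deriv_eq_deriv_mul (u := φ) (u' := φ')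
    (v := fun r : ℝ => (((1 + r ^ 2)⁻¹ : ℝ) : ℂ)) (v' := fun r : ℝ => ((-(2 * r / (1 + r ^ 2) ^ 2) : ℝ) : ℂ))
    (a' := 0) (b' := 0)
    (fun r _ => hφ r) (fun r _ => hv r) ?_ ?_ ?_ ?_
  · simp only [Complex.ofReal_neg, mul_neg, integral_neg] at key
    have := neg_eq_iff_eq_neg.1 key
    rw [this]; ring
  · refine hi.mono' (hφc.mul hkc).aestronglyMeasurable (Eventually.of_forall fun r => ?_)
    simp only [Pi.mul_apply]
    rw [norm_mul, hn1]
    calc ‖φ r‖ * |2 * r / (1 + r ^ 2) ^ 2| ≤ M * |r| * |2 * r / (1 + r ^ 2) ^ 2| := by gcongr; exact hb r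
      _ = M * (|r| * |2 * r / (1 + r ^ 2) ^ 2|) := by ring
      _ ≤ _ := mul_le_mul_of_nonneg_left (kb r) hM0
  · refine hi.mono' (hc.mul hvc).aestronglyMeasurable (Eventually.of_forall fun r => ?_)
    simp only [Pi.mul_apply]
    rw [norm_mul, hn2]
    have : 0 ≤ (1 + r^2)⁻¹ := by positivity
    exact mul_le_mul (hM r) (by linarith) this hM0
  · exact squeeze_zero_norm hb2 (tendsto_aux M _ tendsto_abs_atBot_atTop)
  · exact squeeze_zero_norm hb2 (tendsto_aux M _ tendsto_abs_atTop_atTop)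

lemma vline_int {H : ℂ → ℂ} {M : ℝ} (hd : DifferentiableOn ℂ H {z | 0 < z.im})
    (hM : ∀ z : ℂ, 0 < z.im → ‖H z‖ ≤ M) (t : ℝ) {a b : ℝ} (ha : 0 ≤ a) (hb : 0 ≤ b) :
    IntervalIntegrable (fun y : ℝ => H (t + y * Complex.I)) volume a b := by
  have h0 : IntegrableOn (fun y : ℝ => H (t + y * Complex.I)) (Ioc 0 (max a b)) := by
    have hcont : ContinuousOn (fun y : ℝ => H (t + y * Complex.I)) (Ioc 0 (max a b)) := by
      refine hd.continuousOn.comp (by fun_prop) ?_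
      intro y hy; simp [hy.1]
    refine Integrable.of_bound (hcont.aestronglyMeasurable measurableSet_Ioc) M ?_
    refine (ae_restrict_mem measurableSet_Ioc).mono fun y hy => hM _ (by simp [hy.1])
  rw [intervalIntegrable_iff]
  refine h0.mono_set ?_
  rw [uIoc]
  exact Ioc_subset_Ioc_left (le_min ha hb)

lemma radial {H : ℂ → ℂ} {M : ℝ} (hd : DifferentiableOn ℂ H {z | 0 < z.im})
    (hM : ∀ z : ℂ, 0 < z.im → ‖H z‖ ≤ M) :
    ∀ᵐ t : ℝ, ∃ L, Tendsto (fun ε : ℝ => H (t + ε * Complex.I)) (𝓝[>] 0) (𝓝 L) := by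
  have hM0 : 0 ≤ M := (norm_nonneg _).trans (hM Complex.I (by simp))
  have hhc : ∀ δ : ℝ, 0 < δ → Continuous (fun s : ℝ => H (s + δ * Complex.I)) := by
    intro δ hδ
    rw [← continuousOn_univ]
    refine hd.continuousOn.comp (by fun_prop) ?_
    intro s _; simp [hδ]
  set ψd : ℝ → ℝ → ℂ := fun δ t => ∫ s in (0:ℝ)..t, H (s + δ * Complex.I) with hψd
  set ψ : ℝ → ℂ := fun t => ψd 1 t - Complex.I * (∫ y in (0:ℝ)..1, H (t + y * Complex.I))
    + Complex.I * (∫ y in (0:ℝ)..1, H ((0:ℝ) + y * Complex.I)) with hψ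
  have hdiff : ∀ δ : ℝ, 0 < δ → δ ≤ 1 → ∀ t, ψd δ t - ψ t =
      Complex.I * (∫ y in (0:ℝ)..δ, H (t + y * Complex.I)) - Complex.I * (∫ y in (0:ℝ)..δ, H ((0:ℝ) + y * Complex.I)) := by
    intro δ hδ hδ1 t
    have hrect := Complex.integral_boundary_rect_eq_zero_of_differentiableOn H
      (δ * Complex.I) (t + Complex.I) (hd.mono (by
        intro z hz
        have h := hz.2
        simp at h
        rw [uIcc_of_le hδ1] at h
        have := h.1
        simp only [mem_ofPred_eq]
        linarith))
    simp at hrect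
    have i1 := intervalIntegral.integral_add_adjacent_intervals (vline_int hd hM t le_rfl hδ.le) (vline_int hd hM t hδ.le zero_le_one)
    have i2 := intervalIntegral.integral_add_adjacent_intervals (vline_int hd hM 0 le_rfl hδ.le) (vline_int hd hM 0 hδ.le zero_le_one)
    simp only [hψ, hψd]
    rw [← i1, ← i2]
    simp only [Complex.ofReal_zero, zero_add, Complex.ofReal_one, one_mul]
    linear_combination hrect
  have hconv : ∀ t, Tendsto (fun δ => ψd δ t) (𝓝[>] 0) (𝓝 (ψ t)) := by
    intro t
    rw [tendsto_iff_norm_sub_tendsto_zero]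
    have hz : Tendsto (fun δ : ℝ => 2 * (M * δ)) (𝓝[>] 0) (𝓝 0) := by
      have : Tendsto (fun δ : ℝ => 2 * (M * δ)) (𝓝 0) (𝓝 (2 * (M * 0))) :=
        Continuous.tendsto (by fun_prop) 0
      simp only [mul_zero] at this
      exact this.mono_left nhdsWithin_le_nhds
    refine squeeze_zero' (Eventually.of_forall fun _ => norm_nonneg _) ?_ hz
    filter_upwards [Ioc_mem_nhdsGT (zero_lt_one' ℝ)] with δ hδ
    rw [hdiff δ hδ.1 hδ.2]
    have hbd : ∀ t : ℝ, ‖∫ y in (0:ℝ)..δ, H (t + y * Complex.I)‖ ≤ M * δ := by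
      intro t
      have : ‖∫ y in (0:ℝ)..δ, H (t + y * Complex.I)‖ ≤ M * |δ - 0| := by
        apply intervalIntegral.norm_integral_le_of_norm_le_const
        intro y hy
        rw [uIoc_of_le hδ.1.le] at hy
        exact hM _ (by simp [hy.1])
      rwa [sub_zero, abs_of_pos hδ.1] at this
    refine (norm_sub_le _ _).trans ?_
    rw [norm_mul, norm_mul, Complex.norm_I]
    linarith [hbd t, hbd 0]
  have hlipd : ∀ δ : ℝ, 0 < δ → ∀ a b, ‖ψd δ b - ψd δ a‖ ≤ M * |b - a| := by
    intro δ hδ a b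
    simp only [hψd]
    rw [intervalIntegral.integral_interval_sub_left ((hhc δ hδ).intervalIntegrable _ _) ((hhc δ hδ).intervalIntegrable _ _)]
    apply intervalIntegral.norm_integral_le_of_norm_le_const
    intro y _
    exact hM _ (by simp [hδ])
  have hlip : ∀ a b, ‖ψ b - ψ a‖ ≤ M * |b - a| := by
    intro a b
    refine le_of_tendsto ((hconv b).sub (hconv a)).norm ?_
    filter_upwards [self_mem_nhdsWithin] with δ hδ using hlipd δ hδ a b
  have hL : LipschitzWith (Real.toNNReal M) ψ := by
    apply LipschitzWith.of_dist_le_mul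
    intro a b
    rw [dist_eq_norm, Real.dist_eq, Real.coe_toNNReal _ hM0]
    exact hlip b a
  have hψc : Continuous ψ := hL.continuous
  -- representation
  have hrep1 : ∀ (t ε δ : ℝ), 0 < ε → 0 < δ → Real.pi * H (t + ε * Complex.I + δ * Complex.I) =
      ∫ r : ℝ, ((ψd δ (t + ε * r) - ψd δ t) / ε) * ((2 * r / (1 + r ^ 2) ^ 2 : ℝ) : ℂ) := by
    intro t ε δ hε hδ
    have hP := (poisson_formula (fun z => H (z + δ * Complex.I)) hδ (shift_diff hd δ)
      (M := M) (fun z hz => hM _ (by simp; linarith)) (x := t) (y := ε) hε).2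
    rw [← hP]
    have hεc : (ε : ℂ) ≠ 0 := by exact_mod_cast hε.ne'
    have hder : ∀ r : ℝ, HasDerivAt (fun r : ℝ => (ψd δ (t + ε * r) - ψd δ t) / (ε : ℂ)) (H (((t + ε * r : ℝ) : ℂ) + δ * Complex.I)) r := by
      intro r
      have h1 : HasDerivAt (ψd δ) (H (((t + ε * r : ℝ) : ℂ) + δ * Complex.I)) (t + ε * r) :=
        intervalIntegral.integral_hasDerivAt_right ((hhc δ hδ).intervalIntegrable _ _)
          ((hhc δ hδ).stronglyMeasurableAtFilter _ _) (hhc δ hδ).continuousAt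
      have h2 : HasDerivAt (fun r : ℝ => t + ε * r) ε r := by
        simpa using ((hasDerivAt_id r).const_mul ε).const_add t
      have h3 := ((h1.scomp r h2).sub_const (ψd δ t)).div_const (ε : ℂ)
      have e : (ε • H (((t + ε * r : ℝ) : ℂ) + δ * Complex.I)) / (ε : ℂ) = H (((t + ε * r : ℝ) : ℂ) + δ * Complex.I) := by
        rw [Complex.real_smul]; field_simp
      rw [e] at h3
      exact h3
    rw [← lip_repr (φ' := fun r : ℝ => H (((t + ε * r : ℝ) : ℂ) + δ * Complex.I)) (M := M) hder]
    · -- change of variables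
      have hcv : ∀ g : ℝ → ℂ, ∫ r : ℝ, g (t + ε * r) = (ε : ℂ)⁻¹ * ∫ s, g s := by
        intro g
        have e1 := Measure.integral_comp_mul_left (fun s => g (t + s)) ε
        have e2 := integral_add_left_eq_self (μ := volume) g t
        rw [e1, e2, abs_of_pos (inv_pos.2 hε), Complex.real_smul]
        push_cast; rfl
      have := hcv (fun s => H (s + δ * Complex.I) * ((ε * pk t ε s : ℝ) : ℂ))
      have e3 : ∀ s : ℝ, H (s + δ * Complex.I) * ((ε * pk t ε s : ℝ) : ℂ) = ε * (H (s + δ * Complex.I) * (pk t ε s : ℂ)) := by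
        intro s; push_cast; ring
      simp_rw [e3] at this
      rw [integral_const_mul, integral_const_mul, ← mul_assoc, inv_mul_cancel₀ hεc, one_mul] at this
      rw [← this, ← integral_const_mul]
      congr 1; ext r
      rw [pk_eq hε]
      have : (t + ε * r - t) / ε = r := by field_simp; ring
      rw [this]
      push_cast
      field_simp
    · exact (hhc δ hδ).comp (by fun_prop)
    · intro r; exact hM _ (by simp [hδ])
    · intro r
      rw [norm_div, Complex.norm_real, Real.norm_eq_abs, abs_of_pos hε, div_le_iff₀ hε]
      have := hlipd δ hδ t (t + ε * r)
      rw [add_sub_cancel_left, abs_mul, abs_of_pos hε] at this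
      linarith
  have hkm : Continuous (fun r : ℝ => ((2 * r / (1 + r ^ 2) ^ 2 : ℝ) : ℂ)) := by
    refine Complex.continuous_ofReal.comp (Continuous.div (by fun_prop) (by fun_prop) ?_)
    intro r; positivity
  have hi : Integrable (fun r : ℝ => M * (2 * (1 + r ^ 2)⁻¹)) :=
    (integrable_inv_one_add_sq.const_mul 2).const_mul M
  have hdom : ∀ (a : ℂ) (r : ℝ), ‖a‖ ≤ M * |r| → ‖a * ((2 * r / (1 + r ^ 2) ^ 2 : ℝ) : ℂ)‖ ≤ M * (2 * (1 + r ^ 2)⁻¹) := by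
    intro a r ha
    rw [norm_mul, Complex.norm_real, Real.norm_eq_abs]
    calc ‖a‖ * |2 * r / (1 + r ^ 2) ^ 2| ≤ M * |r| * |2 * r / (1 + r ^ 2) ^ 2| := by gcongr
      _ = M * (|r| * |2 * r / (1 + r ^ 2) ^ 2|) := by ring
      _ ≤ _ := mul_le_mul_of_nonneg_left (kb r) hM0
  have hquot : ∀ (χ : ℝ → ℂ), (∀ a b, ‖χ b - χ a‖ ≤ M * |b - a|) → ∀ t ε r : ℝ, 0 < ε →
      ‖(χ (t + ε * r) - χ t) / (ε : ℂ)‖ ≤ M * |r| := by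
    intro χ hχ t ε r hε
    rw [norm_div, Complex.norm_real, Real.norm_eq_abs, abs_of_pos hε, div_le_iff₀ hε]
    have := hχ t (t + ε * r)
    rw [add_sub_cancel_left, abs_mul, abs_of_pos hε] at this
    linarith
  have hrep : ∀ (t ε : ℝ), 0 < ε → Real.pi * H (t + ε * Complex.I) =
      ∫ r : ℝ, ((ψ (t + ε * r) - ψ t) / ε) * ((2 * r / (1 + r ^ 2) ^ 2 : ℝ) : ℂ) := by
    intro t ε hε
    have l1 : Tendsto (fun δ : ℝ => (Real.pi : ℂ) * H (t + ε * Complex.I + δ * Complex.I)) (𝓝[>] 0)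
        (𝓝 (Real.pi * H (t + ε * Complex.I))) := by
      have hopen : IsOpen {z : ℂ | 0 < z.im} := isOpen_lt continuous_const Complex.continuous_im
      have hca : ContinuousAt H (t + ε * Complex.I) := 
        (hd.continuousOn).continuousAt (hopen.mem_nhds (by simp [hε]))
      have h1 : Tendsto (fun δ : ℝ => (t + ε * Complex.I + δ * Complex.I : ℂ)) (𝓝[>] 0) (𝓝 (t + ε * Complex.I)) := by
        have : Tendsto (fun δ : ℝ => (t + ε * Complex.I + δ * Complex.I : ℂ)) (𝓝 0) (𝓝 (t + ε * Complex.I + (0:ℝ) * Complex.I)) :=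
          Continuous.tendsto (by fun_prop) 0
        simp only [Complex.ofReal_zero, zero_mul, add_zero] at this
        exact this.mono_left nhdsWithin_le_nhds
      exact (hca.tendsto.comp h1).const_mul _
    have l2 : Tendsto (fun δ : ℝ => ∫ r : ℝ, ((ψd δ (t + ε * r) - ψd δ t) / ε) * ((2 * r / (1 + r ^ 2) ^ 2 : ℝ) : ℂ)) (𝓝[>] 0)
        (𝓝 (∫ r : ℝ, ((ψ (t + ε * r) - ψ t) / ε) * ((2 * r / (1 + r ^ 2) ^ 2 : ℝ) : ℂ))) := by
      refine tendsto_integral_filter_of_dominated_convergence _ ?_ ?_ hi ?_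
      · filter_upwards [self_mem_nhdsWithin] with δ hδ
        have hc : Continuous (ψd δ) := by
          have : LipschitzWith (Real.toNNReal M) (ψd δ) := by
            apply LipschitzWith.of_dist_le_mul
            intro a b
            rw [dist_eq_norm, Real.dist_eq, Real.coe_toNNReal _ hM0]
            exact hlipd δ hδ b a
          exact this.continuous
        exact Continuous.aestronglyMeasurable (by fun_prop)
      · filter_upwards [self_mem_nhdsWithin] with δ hδ
        exact Eventually.of_forall fun r => hdom _ _ (hquot _ (hlipd δ hδ) t ε r hε)
      · exact Eventually.of_forall fun r => (((hconv _).sub (hconv _)).div_const _).mul_const _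
    refine tendsto_nhds_unique (l1.congr' ?_) l2
    filter_upwards [self_mem_nhdsWithin] with δ hδ using hrep1 t ε δ hε hδ
  filter_upwards [hL.ae_differentiableAt_real] with t ht
  obtain ⟨d, hdt⟩ : ∃ d, HasDerivAt ψ d t := ⟨_, ht.hasDerivAt⟩
  have l3 : Tendsto (fun ε : ℝ => ∫ r : ℝ, ((ψ (t + ε * r) - ψ t) / ε) * ((2 * r / (1 + r ^ 2) ^ 2 : ℝ) : ℂ)) (𝓝[>] 0)
      (𝓝 (∫ r : ℝ, (r • d) * ((2 * r / (1 + r ^ 2) ^ 2 : ℝ) : ℂ))) := by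
    refine tendsto_integral_filter_of_dominated_convergence _ ?_ ?_ hi ?_
    · exact Eventually.of_forall fun ε => Continuous.aestronglyMeasurable (by fun_prop)
    · filter_upwards [self_mem_nhdsWithin] with ε hε
      exact Eventually.of_forall fun r => hdom _ _ (hquot _ hlip t ε r hε)
    · refine Eventually.of_forall fun r => Tendsto.mul_const _ ?_
      have h1 : HasDerivAt (fun ε : ℝ => ψ (t + ε * r)) (r • d) 0 := by
        have h2 : HasDerivAt (fun ε : ℝ => t + ε * r) r 0 := by
          simpa using ((hasDerivAt_id (0:ℝ)).mul_const r).const_add t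
        have h3 : HasDerivAt ψ d (t + 0 * r) := by simpa using hdt
        exact h3.scomp (0:ℝ) h2
      have h4 := h1.tendsto_slope_zero_right
      refine h4.congr fun ε => ?_
      simp only [zero_add, zero_mul, add_zero]
      rw [Complex.real_smul]; push_cast; ring
  refine ⟨(Real.pi : ℂ)⁻¹ * ∫ r : ℝ, (r • d) * ((2 * r / (1 + r ^ 2) ^ 2 : ℝ) : ℂ), ?_⟩
  refine (l3.const_mul (Real.pi : ℂ)⁻¹).congr' ?_
  filter_upwards [self_mem_nhdsWithin] with ε hε
  rw [← hrep t ε hε, ← mul_assoc, inv_mul_cancel₀ (by exact_mod_cast Real.pi_ne_zero), one_mul]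

lemma CT_hline {u : ℝ → ℝ} (hu : Integrable u μI) {δ : ℝ} (hδ : 0 < δ) :
    Continuous (fun t : ℝ => CT u (t + δ * Complex.I)) := by
  rw [← continuousOn_univ]
  refine (CT_diff hu).continuousOn.comp (by fun_prop) ?_
  intro s _; simp [hδ]

lemma CT_conv {u : ℝ → ℝ} (hu : Integrable u μI) (h0 : ∀ x, 0 ≤ u x) :
    ∀ᵐ (t : ℝ) ∂μI, ∃ L : ℂ, Tendsto (fun ε : ℝ => CT u (t + ε * Complex.I)) (𝓝[>] 0) (𝓝 L) := by
  have hn : ∀ z : ℂ, 0 < z.im → 1 ≤ ‖1 - Complex.I * CT u z‖ := by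
    intro z hz
    have := CT_im_nonneg hu h0 hz
    refine le_trans ?_ (Complex.re_le_norm _)
    simpa using this
  have hne : ∀ z : ℂ, 0 < z.im → 1 - Complex.I * CT u z ≠ 0 := by
    intro z hz h
    have := hn z hz
    rw [h, norm_zero] at this
    linarith
  set H : ℂ → ℂ := fun z => (1 - Complex.I * CT u z)⁻¹ with hH
  have hd : DifferentiableOn ℂ H {z | 0 < z.im} :=
    DifferentiableOn.inv ((differentiableOn_const _).sub ((differentiableOn_const _).mul (CT_diff hu)))
      (fun z hz => hne z hz)
  have hM : ∀ z : ℂ, 0 < z.im → ‖H z‖ ≤ 1 := by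
    intro z hz
    rw [hH]
    simp only [norm_inv]
    exact inv_le_one_of_one_le₀ (hn z hz)
  have hrad : ∀ᵐ (t : ℝ) ∂μI, ∃ L, Tendsto (fun ε : ℝ => H (t + ε * Complex.I)) (𝓝[>] 0) (𝓝 L) :=
    ae_restrict_of_ae (radial hd hM)
  set e : ℕ → ℝ := fun n => 1 / ((n : ℝ) + 1) with he
  have hepos : ∀ n, 0 < e n := fun n => by simp only [he]; positivity
  have het : Tendsto e atTop (𝓝[>] 0) := by
    rw [tendsto_nhdsWithin_iff]
    exact ⟨tendsto_one_div_add_atTop_nhds_zero_nat, Eventually.of_forall hepos⟩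
  have hfin : ∀ᵐ (t : ℝ) ∂μI, liminf (fun n => ENNReal.ofReal (Real.log ‖1 - Complex.I * CT u (t + e n * Complex.I)‖)) atTop < ⊤ := by
    have hm : ∀ n, Measurable (fun t : ℝ => ENNReal.ofReal (Real.log ‖1 - Complex.I * CT u (t + e n * Complex.I)‖)) := by
      intro n
      have := (CT_hline hu (hepos n)).measurable
      fun_prop
    have hle := lintegral_liminf_le (μ := μI) (u := atTop) hm
    refine ae_lt_top (Measurable.liminf hm) ?_
    refine (lt_of_le_of_lt (hle.trans ?_) (ENNReal.ofReal_lt_top (r := 2 * Real.pi * ∫ x, u x ∂μI))).ne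
    refine (liminf_le_liminf (Eventually.of_forall fun n => E1 hu h0 (hepos n))).trans ?_
    simp
  filter_upwards [hrad, hfin] with t ⟨L, hL⟩ hft
  have hL0 : L ≠ 0 := by
    intro h
    rw [h] at hL
    have h1 : Tendsto (fun n => ‖H (t + e n * Complex.I)‖) atTop (𝓝[>] 0) := by
      rw [tendsto_nhdsWithin_iff]
      refine ⟨by simpa using (hL.comp het).norm, Eventually.of_forall fun n => ?_⟩
      exact norm_pos_iff.2 (inv_ne_zero (hne _ (by simpa using hepos n)))
    have h2 : Tendsto (fun n => ENNReal.ofReal (Real.log ‖1 - Complex.I * CT u (t + e n * Complex.I)‖)) atTop (𝓝 ⊤) := by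
      refine ENNReal.tendsto_ofReal_atTop.comp (Real.tendsto_log_atTop.comp ?_)
      refine (tendsto_inv_nhdsGT_zero.comp h1).congr fun n => ?_
      simp [hH]
    rw [h2.liminf_eq] at hft
    exact lt_irrefl _ hft
  refine ⟨Complex.I * (L⁻¹ - 1), ?_⟩
  refine (((hL.inv₀ hL0).sub_const 1).const_mul Complex.I).congr fun ε => ?_
  simp only [hH, inv_inv]
  ring_nf
  rw [Complex.I_sq]; ring

lemma qr_conv_nonneg {u : ℝ → ℝ} (hu : Integrable u μI) (h0 : ∀ x, 0 ≤ u x) :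
    ∀ᵐ (t : ℝ) ∂μI, ∃ L : ℝ, Tendsto (fun ε : ℝ => qr ε u t) (𝓝[>] 0) (𝓝 L) := by
  filter_upwards [CT_conv hu h0] with t ⟨L, hL⟩
  refine ⟨L.re, ((Complex.continuous_re.tendsto L).comp hL).congr' ?_⟩
  filter_upwards [self_mem_nhdsWithin] with ε hε
  exact CT_re hu t hε

lemma qk_bound {s ε : ℝ} (hε : 0 < ε) : |s / (s ^ 2 + ε ^ 2)| ≤ ε⁻¹ := by
  rw [abs_div, abs_of_pos (by positivity : 0 < s^2+ε^2), div_le_iff₀ (by positivity), inv_mul_eq_div,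
    le_div_iff₀ hε, ← sq_abs s]
  nlinarith [sq_nonneg (|s| - ε), abs_nonneg s]

lemma qk_cont {ε : ℝ} (hε : 0 < ε) : Continuous (fun p : ℝ × ℝ => (p.1 - p.2) / ((p.1 - p.2) ^ 2 + ε ^ 2)) := by
  refine Continuous.div (by fun_prop) (by fun_prop) ?_
  intro p; positivity

lemma qk_cont1 {ε : ℝ} (hε : 0 < ε) (t : ℝ) : Continuous (fun x : ℝ => (x - t) / ((x - t) ^ 2 + ε ^ 2)) := by
  refine Continuous.div (by fun_prop) (by fun_prop) ?_
  intro p; positivity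

/-- complex conjugate Poisson integral -/
def Qc (ε : ℝ) (u : ℝ → ℂ) (t : ℝ) : ℂ := ∫ x, u x * (((x - t) / ((x - t) ^ 2 + ε ^ 2) : ℝ) : ℂ) ∂μI

lemma Qc_int {u : ℝ → ℂ} (hu : Integrable u μI) {ε : ℝ} (hε : 0 < ε) (t : ℝ) :
    Integrable (fun x => u x * (((x - t) / ((x - t) ^ 2 + ε ^ 2) : ℝ) : ℂ)) μI := by
  refine hu.mul_bdd (c := ε⁻¹) (Complex.continuous_ofReal.comp (qk_cont1 hε t)).aestronglyMeasurable ?_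
  refine Eventually.of_forall fun x => ?_
  rw [Complex.norm_real, Real.norm_eq_abs]
  exact qk_bound hε

lemma qr_int {u : ℝ → ℝ} (hu : Integrable u μI) {ε : ℝ} (hε : 0 < ε) (t : ℝ) :
    Integrable (fun x => u x * ((x - t) / ((x - t) ^ 2 + ε ^ 2))) μI := by
  refine hu.mul_bdd (c := ε⁻¹) (qk_cont1 hε t).aestronglyMeasurable ?_
  exact Eventually.of_forall fun x => qk_bound hε

lemma Qc_eq {u : ℝ → ℂ} (hu : Integrable u μI) {ε : ℝ} (hε : 0 < ε) (t : ℝ) :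
    Qc ε u t = (qr ε (fun x => (u x).re) t : ℂ) + (qr ε (fun x => (u x).im) t : ℂ) * Complex.I := by
  have h := Qc_int hu hε t
  apply Complex.ext
  · have h1 := integral_re h
    simp only [RCLike.re_eq_complex_re, Complex.re_mul_ofReal] at h1
    rw [Complex.add_re, Complex.ofReal_re, Complex.re_ofReal_mul, Complex.I_re, mul_zero, add_zero]
    exact h1.symm
  · have h1 := integral_im h
    simp only [RCLike.im_eq_complex_im, Complex.im_mul_ofReal] at h1
    rw [Complex.add_im, Complex.ofReal_im, Complex.im_ofReal_mul, Complex.I_im, mul_one, zero_add]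
    exact h1.symm

lemma qr_conv {u : ℝ → ℝ} (hu : Integrable u μI) :
    ∀ᵐ (t : ℝ) ∂μI, ∃ L : ℝ, Tendsto (fun ε : ℝ => qr ε u t) (𝓝[>] 0) (𝓝 L) := by
  filter_upwards [qr_conv_nonneg hu.pos_part (fun x => le_max_right _ _),
    qr_conv_nonneg hu.neg_part (fun x => le_max_right _ _)] with t ⟨L1, h1⟩ ⟨L2, h2⟩
  refine ⟨L1 - L2, (h1.sub h2).congr' ?_⟩
  filter_upwards [self_mem_nhdsWithin] with ε hε
  unfold qr
  rw [← integral_sub (qr_int hu.pos_part hε t) (qr_int hu.neg_part hε t)]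
  congr 1; ext x
  rw [← sub_mul]
  congr 1
  rcases le_total 0 (u x) with h | h
  · rw [max_eq_left h, max_eq_right (by linarith)]; ring
  · rw [max_eq_right h, max_eq_left (by linarith)]; ring

lemma Qc_conv {u : ℝ → ℂ} (hu : Integrable u μI) :
    ∀ᵐ (t : ℝ) ∂μI, ∃ L : ℂ, Tendsto (fun ε : ℝ => Qc ε u t) (𝓝[>] 0) (𝓝 L) := by
  filter_upwards [qr_conv hu.re, qr_conv hu.im] with t ⟨L1, h1⟩ ⟨L2, h2⟩
  refine ⟨L1 + L2 * Complex.I, ?_⟩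
  have h3 := (((Complex.continuous_ofReal.tendsto L1).comp h1).add
    (((Complex.continuous_ofReal.tendsto L2).comp h2).mul_const Complex.I))
  refine h3.congr' ?_
  filter_upwards [self_mem_nhdsWithin] with ε hε
  rw [Qc_eq hu hε]
  rfl

lemma pk_dyadic {t ε : ℝ} (hε : 0 < ε) (x : ℝ) :
    ∃ k : ℕ, x ∈ Metric.closedBall t (2 ^ k * ε) ∧ pk t ε x ≤ 4 * (1/4 : ℝ) ^ k * ε⁻¹ := by
  classical
  have hex : ∃ k : ℕ, |x - t| ≤ 2 ^ k * ε := by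
    obtain ⟨k, hk⟩ := pow_unbounded_of_one_lt (|x - t| / ε) (one_lt_two : (1:ℝ) < 2)
    exact ⟨k, by rw [div_lt_iff₀ hε] at hk; exact hk.le⟩
  refine ⟨Nat.find hex, ?_, ?_⟩
  · rw [Metric.mem_closedBall, Real.dist_eq]; exact Nat.find_spec hex
  · rcases h : Nat.find hex with _ | k
    · unfold pk
      rw [div_le_iff₀ (by positivity), pow_zero, mul_one, mul_assoc, inv_mul_eq_div]
      have : ε ≤ ((x - t) ^ 2 + ε ^ 2) / ε := by
        rw [le_div_iff₀ hε]; nlinarith [sq_nonneg (x - t)]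
      linarith
    · have h1 := Nat.find_min hex (m := k) (by omega)
      push Not at h1
      unfold pk
      have h2 : (2 ^ k * ε) ^ 2 ≤ (x - t) ^ 2 := by
        rw [← sq_abs (x - t)]
        exact pow_le_pow_left₀ (by positivity) h1.le 2
      rw [div_le_iff₀ (by positivity)]
      have h3 : (1/4 : ℝ) ^ (k+1) * 4 * (2 ^ k) ^ 2 = 1 := by
        rw [pow_succ, ← pow_mul, mul_comm k 2, pow_mul]
        have : (1/4 : ℝ) ^ k * (1 / 4) * 4 * (2 ^ 2) ^ k = ((1/4) * 2 ^ 2) ^ k := by rw [mul_pow]; ring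
        rw [this]; norm_num
      have h4 : 4 * (1/4 : ℝ) ^ (k+1) * ε⁻¹ * (2 ^ k * ε) ^ 2 = ε := by
        have : 4 * (1/4 : ℝ) ^ (k+1) * ε⁻¹ * (2 ^ k * ε) ^ 2 = ((1/4 : ℝ) ^ (k+1) * 4 * (2 ^ k) ^ 2) * (ε⁻¹ * ε) * ε := by ring
        rw [this, h3, inv_mul_cancel₀ hε.ne']; ring
      have h5 : 4 * (1/4 : ℝ) ^ (k+1) * ε⁻¹ * (2 ^ k * ε) ^ 2 ≤ 4 * (1/4 : ℝ) ^ (k+1) * ε⁻¹ * ((x - t) ^ 2 + ε ^ 2) := by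
        apply mul_le_mul_of_nonneg_left _ (by positivity)
        nlinarith [sq_nonneg ε]
      linarith

lemma leb_pt {U : ℝ → ℂ} (hU : Integrable U) :
    ∀ᵐ (t : ℝ), Tendsto (fun ε : ℝ => ∫⁻ x, ENNReal.ofReal (pk t ε x) * ENNReal.ofReal ‖U x - U t‖) (𝓝[>] 0) (𝓝 0) := by
  filter_upwards [IsUnifLocDoublingMeasure.ae_tendsto_average_norm_sub (μ := (volume : Measure ℝ)) hU.locallyIntegrable 1] with t ht
  have h0 := ht (l := 𝓝[>] (0:ℝ)) (fun _ => t) (fun r => r) tendsto_id (by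
    filter_upwards [self_mem_nhdsWithin] with r hr
    exact Metric.mem_closedBall_self (by rw [one_mul]; exact le_of_lt hr))
  set m : ℝ → ℝ := fun r => ∫ y in Metric.closedBall t r, ‖U y - U t‖ with hm
  have hint : ∀ r, IntegrableOn (fun y => ‖U y - U t‖) (Metric.closedBall t r) := by
    intro r
    refine (hU.integrableOn.sub ?_).norm
    exact integrableOn_const measure_closedBall_lt_top.ne
  have hmn : ∀ r, 0 ≤ m r := fun r => integral_nonneg fun _ => norm_nonneg _
  have hmt : Tendsto (fun r => m r / r) (𝓝[>] 0) (𝓝 0) := by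
    have := h0.const_mul 2
    rw [mul_zero] at this
    refine this.congr' ?_
    filter_upwards [self_mem_nhdsWithin] with r hr
    have hr : 0 < r := hr
    rw [setAverage_eq, Real.volume_real_closedBall hr.le, smul_eq_mul, hm]
    field_simp
  obtain ⟨r0, hr0, hb0⟩ : ∃ r0 > 0, ∀ r, 0 < r → r < r0 → m r / r < 1 := by
    have := hmt.eventually (gt_mem_nhds zero_lt_one)
    rw [eventually_nhdsWithin_iff, Metric.eventually_nhds_iff] at this
    obtain ⟨r0, hr0, h⟩ := this
    refine ⟨r0, hr0, fun r h1 h2 => h ?_ h1⟩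
    rw [Real.dist_eq, sub_zero, abs_of_pos h1]; exact h2
  obtain ⟨C, hC⟩ : ∃ C, ∀ r, 0 < r → m r / r ≤ C := by
    refine ⟨max 1 ((∫ x, ‖U x‖) / r0 + 2 * ‖U t‖), fun r hr => ?_⟩
    rcases lt_or_ge r r0 with h | h
    · exact le_max_of_le_left (hb0 r hr h).le
    · apply le_max_of_le_right
      rw [div_le_iff₀ hr]
      have h1 : m r ≤ (∫ x, ‖U x‖) + 2 * r * ‖U t‖ := by
        calc m r ≤ ∫ y in Metric.closedBall t r, (‖U y‖ + ‖U t‖) := by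
              refine integral_mono (hint r) (hU.norm.integrableOn.add (integrableOn_const measure_closedBall_lt_top.ne)) fun y => norm_sub_le _ _
          _ = (∫ y in Metric.closedBall t r, ‖U y‖) + 2 * r * ‖U t‖ := by
              rw [integral_add hU.norm.integrableOn (integrableOn_const measure_closedBall_lt_top.ne)]
              rw [setIntegral_const, Real.volume_real_closedBall hr.le, smul_eq_mul]
          _ ≤ _ := by
              gcongr
              · exact Eventually.of_forall fun _ => norm_nonneg _
              · exact hU.norm
              · exact Measure.restrict_le_self
      have h2 : (∫ x, ‖U x‖) ≤ (∫ x, ‖U x‖) / r0 * r := by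
        rw [div_mul_eq_mul_div, le_div_iff₀ hr0]
        exact mul_le_mul_of_nonneg_left h (integral_nonneg fun _ => norm_nonneg _)
      nlinarith
  have hC0 : 0 ≤ C := (div_nonneg (hmn 1) zero_le_one).trans (hC 1 one_pos)
  set b : ℝ → ℕ → ℝ := fun ε k => 4 * (1/2 : ℝ) ^ k * (m (2 ^ k * ε) / (2 ^ k * ε)) with hb
  have hsum : Summable (fun k : ℕ => 4 * (1/2 : ℝ) ^ k * C) :=
    (summable_geometric_two.mul_left 4).mul_right C
  have hbn : ∀ ε, 0 < ε → ∀ k, 0 ≤ b ε k := fun ε hε k =>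
    mul_nonneg (by positivity) (div_nonneg (hmn _) (by positivity))
  have hbd : ∀ ε, 0 < ε → ∀ k, b ε k ≤ 4 * (1/2 : ℝ) ^ k * C := fun ε hε k =>
    mul_le_mul_of_nonneg_left (hC _ (by positivity)) (by positivity)
  have hbt : Tendsto (fun ε => ∑' k, b ε k) (𝓝[>] 0) (𝓝 0) := by
    have := tendsto_tsum_of_dominated_convergence (𝓕 := 𝓝[>] (0:ℝ)) (f := b) (g := fun _ => 0) hsum (fun k => ?_) ?_
    · simpa using this
    · have h1 : Tendsto (fun ε : ℝ => 2 ^ k * ε) (𝓝[>] 0) (𝓝[>] 0) := by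
        rw [tendsto_nhdsWithin_iff]
        constructor
        · have : Tendsto (fun ε : ℝ => 2 ^ k * ε) (𝓝 0) (𝓝 (2 ^ k * 0)) := (continuous_const.mul continuous_id).tendsto 0
          rw [mul_zero] at this
          exact this.mono_left nhdsWithin_le_nhds
        · filter_upwards [self_mem_nhdsWithin] with r hr
          exact mul_pos (by positivity) (show (0:ℝ) < r from hr)
      have h2 := (hmt.comp h1).const_mul (4 * (1/2 : ℝ) ^ k)
      rw [mul_zero] at h2
      exact h2
    · filter_upwards [self_mem_nhdsWithin] with ε hε k
      rw [Real.norm_of_nonneg (hbn ε hε k)]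
      exact hbd ε hε k
  have hbt2 : Tendsto (fun ε => ENNReal.ofReal (∑' k, b ε k)) (𝓝[>] 0) (𝓝 0) := by
    simpa using ENNReal.tendsto_ofReal hbt
  refine tendsto_of_tendsto_of_tendsto_of_le_of_le' tendsto_const_nhds hbt2 (Eventually.of_forall fun _ => zero_le) ?_
  filter_upwards [self_mem_nhdsWithin] with ε hε
  have hε : 0 < ε := hε
  rw [ENNReal.ofReal_tsum_of_nonneg (hbn ε hε) (Summable.of_nonneg_of_le (hbn ε hε) (hbd ε hε) hsum)]
  calc _ ≤ ∫⁻ x, ∑' k : ℕ, (Metric.closedBall t (2 ^ k * ε)).indicator (fun x => ENNReal.ofReal (4 * (1/4 : ℝ) ^ k * ε⁻¹) * ENNReal.ofReal ‖U x - U t‖) x := by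
        refine lintegral_mono fun x => ?_
        obtain ⟨k, hk, hk2⟩ := pk_dyadic (t := t) hε x
        refine le_trans ?_ (ENNReal.le_tsum k)
        rw [indicator_of_mem hk]
        gcongr
    _ = ∑' k, ∫⁻ x, (Metric.closedBall t (2 ^ k * ε)).indicator (fun x => ENNReal.ofReal (4 * (1/4 : ℝ) ^ k * ε⁻¹) * ENNReal.ofReal ‖U x - U t‖) x := by
        refine lintegral_tsum fun k => ?_
        refine AEMeasurable.indicator ?_ Metric.isClosed_closedBall.measurableSet
        exact (((hU.aestronglyMeasurable.sub aestronglyMeasurable_const).norm.aemeasurable).ennreal_ofReal).const_mul _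
    _ ≤ _ := by
        refine ENNReal.tsum_le_tsum fun k => ?_
        rw [lintegral_indicator Metric.isClosed_closedBall.measurableSet, lintegral_const_mul' _ _ ENNReal.ofReal_ne_top,
          ← ofReal_integral_eq_lintegral_ofReal (hint _) (Eventually.of_forall fun _ => norm_nonneg _),
          ← ENNReal.ofReal_mul (by positivity)]
        apply le_of_eq
        congr 1
        simp only [hb]
        have : (1/4:ℝ)^k = (1/2)^k * (1/2)^k := by rw [← mul_pow]; norm_num
        rw [this]
        have h2 : (1/2:ℝ)^k = (2^k)⁻¹ := by rw [one_div, inv_pow]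
        rw [h2]
        change 4 * _ * _ * m _ = _
        field_simp

/-- difference of the conjugate Poisson kernel and the truncated kernel -/
def kap (ε s : ℝ) : ℝ := s / (s ^ 2 + ε ^ 2) - {s : ℝ | ε ≤ |s|}.indicator (fun s => s⁻¹) s

lemma kap_bound {ε : ℝ} (hε : 0 < ε) (s : ℝ) : |kap ε s| ≤ ε / (s ^ 2 + ε ^ 2) := by
  unfold kap
  by_cases h : ε ≤ |s|
  · rw [indicator_of_mem (by exact h)]
    have hs : s ≠ 0 := by rintro rfl; simp at h; linarith
    have : s / (s ^ 2 + ε ^ 2) - s⁻¹ = - (ε ^ 2 / s) / (s ^ 2 + ε ^ 2) := by field_simp; ring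
    rw [this, abs_div, abs_neg, abs_div, abs_of_pos (by positivity : 0 < s ^ 2 + ε ^ 2), abs_of_nonneg (sq_nonneg ε)]
    gcongr
    rw [div_le_iff₀ (by positivity)]
    nlinarith
  · rw [indicator_of_notMem (by exact h), sub_zero, abs_div, abs_of_pos (by positivity : 0 < s ^ 2 + ε ^ 2)]
    gcongr
    push Not at h; exact h.le

lemma kap_meas (ε : ℝ) : Measurable (kap ε) := by
  unfold kap
  refine Measurable.sub (by fun_prop) ?_
  refine Measurable.indicator measurable_inv ?_
  exact measurableSet_le measurable_const measurable_norm

lemma kap_odd (ε s : ℝ) : kap ε (-s) = - kap ε s := by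
  unfold kap
  by_cases h : ε ≤ |s|
  · have h1 : s ∈ {s : ℝ | ε ≤ |s|} := h
    have h2 : -s ∈ {s : ℝ | ε ≤ |s|} := by rw [mem_ofPred_eq, abs_neg]; exact h
    rw [indicator_of_mem h1, indicator_of_mem h2]
    rw [neg_sq, neg_div, inv_neg]; ring
  · have h1 : s ∉ {s : ℝ | ε ≤ |s|} := h
    have h2 : -s ∉ {s : ℝ | ε ≤ |s|} := by rw [mem_ofPred_eq, abs_neg]; exact h
    rw [indicator_of_notMem h1, indicator_of_notMem h2]
    rw [neg_sq, neg_div]; ring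

lemma kap_integral (ε t : ℝ) : ∫ x, kap ε (x - t) = 0 := by
  rw [integral_sub_right_eq_self (kap ε) t]
  have h := integral_neg_eq_self (kap ε) volume
  simp only [kap_odd, integral_neg] at h
  linarith

lemma FHT_lim {u : ℝ → ℂ} (hu : Integrable u μI) :
    ∀ᵐ (t : ℝ) ∂μI, Tendsto (fun ε : ℝ => Qc ε u t) (𝓝[>] 0) (𝓝 (Real.pi * FHT u t)) := by
  set U : ℝ → ℂ := (Ioo (-1:ℝ) 1).indicator u with hUdef
  have hU : Integrable U := (integrable_indicator_iff measurableSet_Ioo).2 hu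
  have h1 : ∀ᵐ (t : ℝ) ∂μI, Tendsto (fun ε : ℝ => ∫⁻ x, ENNReal.ofReal (pk t ε x) * ENNReal.ofReal ‖U x - U t‖) (𝓝[>] 0) (𝓝 0) :=
    ae_restrict_of_ae (leb_pt hU)
  filter_upwards [Qc_conv hu, h1] with t ⟨L, hL⟩ ht
  have key : ∀ ε : ℝ, 0 < ε → Qc ε u t - ∫ x in {x : ℝ | x ∈ Set.Ioo (-1 : ℝ) 1 ∧ ε ≤ |x - t|}, u x / ((x : ℂ) - (t : ℂ))
      = ∫ x, (U x - U t) * (kap ε (x - t) : ℂ) := by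
    intro ε hε
    have hset : MeasurableSet {x : ℝ | ε ≤ |x - t|} :=
      measurableSet_le measurable_const (by fun_prop)
    have hset2 : {x : ℝ | x ∈ Set.Ioo (-1 : ℝ) 1 ∧ ε ≤ |x - t|} = {x : ℝ | ε ≤ |x - t|} ∩ Ioo (-1) 1 := by
      ext x; simp [and_comm]
    have hk1 : Integrable (fun x => (kap ε (x - t) : ℂ)) := by
      refine Integrable.ofReal ?_
      refine (pk_integrable (x := t) hε).mono' ((kap_meas ε).comp (by fun_prop)).aestronglyMeasurable ?_
      exact Eventually.of_forall fun x => kap_bound hε _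
    have hk2 : Integrable (fun x => U x * (kap ε (x - t) : ℂ)) := by
      refine hU.mul_bdd (c := ε⁻¹) hk1.aestronglyMeasurable (Eventually.of_forall fun x => ?_)
      rw [Complex.norm_real]
      refine (kap_bound hε _).trans ?_
      rw [div_le_iff₀ (by positivity), inv_mul_eq_div, le_div_iff₀ hε]
      nlinarith [sq_nonneg (x - t)]
    have hk0 : ∫ x, (kap ε (x - t) : ℂ) = 0 := by
      rw [integral_complex_ofReal, kap_integral]; simp
    have e1 : ∫ x, (U x - U t) * (kap ε (x - t) : ℂ) = ∫ x, U x * (kap ε (x - t) : ℂ) := by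
      simp only [sub_mul]
      rw [integral_sub hk2 (hk1.const_mul _), integral_const_mul, hk0]; simp
    have e2 : ∫ x, U x * (kap ε (x - t) : ℂ) = ∫ x, u x * (kap ε (x - t) : ℂ) ∂μI := by
      unfold μI
      rw [← integral_indicator measurableSet_Ioo]
      congr 1; ext x
      rw [hUdef, indicator_mul_left]
    rw [e1, e2, hset2, ← Measure.restrict_restrict hset, ← integral_indicator hset]
    change Qc ε u t - ∫ x, _ ∂μI = _
    unfold Qc
    rw [← integral_sub (Qc_int hu hε t)]
    · congr 1; ext x
      unfold kap
      by_cases h : ε ≤ |x - t|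
      · rw [indicator_of_mem (by exact h), indicator_of_mem (by exact h)]
        push_cast; ring
      · rw [indicator_of_notMem (by exact h), indicator_of_notMem (by exact h)]
        simp
    · rw [integrable_indicator_iff hset]
      have : IntegrableOn (fun x => u x * ({x : ℝ | ε ≤ |x - t|}.indicator (fun x => ((x:ℂ) - t)⁻¹) x)) {x : ℝ | ε ≤ |x - t|} μI := by
        refine Integrable.integrableOn ?_
        refine hu.mul_bdd (c := ε⁻¹) ?_ (Eventually.of_forall fun x => ?_)
        · refine (Measurable.indicator ?_ hset).aestronglyMeasurable
          exact (Complex.measurable_ofReal.sub_const _).inv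
        · by_cases h : ε ≤ |x - t|
          · rw [indicator_of_mem (by exact h), norm_inv, ← Complex.ofReal_sub, Complex.norm_real]
            exact inv_anti₀ hε h
          · rw [indicator_of_notMem (by exact h), norm_zero]; positivity
      refine this.congr_fun (fun x hx => ?_) hset
      simp only [indicator_of_mem hx, div_eq_mul_inv]
  have hdiff : Tendsto (fun ε : ℝ => Qc ε u t - ∫ x in {x : ℝ | x ∈ Set.Ioo (-1 : ℝ) 1 ∧ ε ≤ |x - t|}, u x / ((x : ℂ) - (t : ℂ))) (𝓝[>] 0) (𝓝 0) := by
    rw [tendsto_zero_iff_enorm_tendsto_zero]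
    refine tendsto_of_tendsto_of_tendsto_of_le_of_le' tendsto_const_nhds ht (Eventually.of_forall fun _ => zero_le) ?_
    filter_upwards [self_mem_nhdsWithin] with ε hε
    rw [key ε hε]
    refine (enorm_integral_le_lintegral_enorm _).trans (lintegral_mono fun x => ?_)
    rw [enorm_mul, mul_comm]
    gcongr
    · rw [← ofReal_norm, Complex.norm_real]
      exact ENNReal.ofReal_le_ofReal (kap_bound hε _)
    · rw [← ofReal_norm]
  have hPV := hL.sub hdiff
  simp only [sub_sub_cancel, sub_zero] at hPV
  have hF : FHT u t = (Real.pi : ℂ)⁻¹ * L := by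
    unfold FHT
    exact (hPV.const_mul _).limUnder_eq
  rw [hF, mul_inv_cancel_left₀ (by exact_mod_cast Real.pi_ne_zero)]
  exact hL

lemma ui_limit {α : Type*} [MeasurableSpace α] {μ : Measure α} [IsFiniteMeasure μ]
    {w : ℕ → α → ℂ} {v : α → ℂ} (hw : ∀ n, Integrable (w n) μ)
    (hlim : ∀ᵐ x ∂μ, Tendsto (fun n => w n x) atTop (𝓝 (v x)))
    (hui : ∀ ε : ℝ, 0 < ε → ∃ δ : ℝ, 0 < δ ∧ ∀ n E, MeasurableSet E → μ E ≤ ENNReal.ofReal δ →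
      ∫⁻ x in E, ‖w n x‖ₑ ∂μ ≤ ENNReal.ofReal ε) :
    Integrable v μ ∧ Tendsto (fun n => ∫ x, w n x ∂μ) atTop (𝓝 (∫ x, v x ∂μ)) := by
  have hvm : AEStronglyMeasurable v μ :=
    aestronglyMeasurable_of_tendsto_ae atTop (fun n => (hw n).1) hlim
  have hv : Integrable v μ := by
    obtain ⟨δ, hδ, h⟩ := hui 1 one_pos
    have hlim2 : ∀ᵐ x ∂μ, Tendsto (fun n => (hw n).1.mk (w n) x) atTop (𝓝 (hvm.mk v x)) := by
      have : ∀ᵐ x ∂μ, ∀ n, w n x = (hw n).1.mk (w n) x := ae_all_iff.2 fun n => (hw n).1.ae_eq_mk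
      filter_upwards [hlim, this, hvm.ae_eq_mk] with x h1 h2 h3
      rw [← h3]
      exact h1.congr h2
    obtain ⟨t, htm, ht, hunif⟩ := tendstoUniformlyOn_of_ae_tendsto' (fun n => (hw n).1.stronglyMeasurable_mk)
      hvm.stronglyMeasurable_mk hlim2 hδ
    have h1 : IntegrableOn v t μ := by
      refine ⟨hvm.restrict, ?_⟩
      have hF : ∫⁻ x in t, ‖v x‖ₑ ∂μ ≤ liminf (fun n => ∫⁻ x in t, ‖w n x‖ₑ ∂μ) atTop := by
        refine le_trans (le_of_eq ?_) (lintegral_liminf_le' (fun n => (hw n).1.restrict.enorm))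
        refine lintegral_congr_ae ?_
        filter_upwards [ae_restrict_of_ae hlim] with x hx
        exact (hx.enorm.liminf_eq).symm
      refine lt_of_le_of_lt (hF.trans ((liminf_le_liminf (Eventually.of_forall fun n => h n t htm ht)).trans ?_)) (ENNReal.ofReal_lt_top (r := 1))
      simp
    have h2 : IntegrableOn v tᶜ μ := by
      rw [Metric.tendstoUniformlyOn_iff] at hunif
      obtain ⟨n, hn⟩ := (hunif 1 one_pos).exists
      have h3 : IntegrableOn (fun x => w n x) tᶜ μ := (hw n).integrableOn
      have h4 : IntegrableOn (fun x => v x - w n x) tᶜ μ := by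
        refine Measure.integrableOn_of_bounded (M := 1) (measure_ne_top _ _) (hvm.sub (hw n).1) ?_
        have e1 := ae_restrict_of_ae (s := tᶜ) hvm.ae_eq_mk
        have e2 := ae_restrict_of_ae (s := tᶜ) (hw n).1.ae_eq_mk
        filter_upwards [e1, e2, ae_restrict_mem htm.compl] with x hx1 hx2 hx3
        rw [hx1, hx2, ← dist_eq_norm]
        exact (hn x hx3).le
      refine (h4.add h3).congr (Eventually.of_forall fun x => ?_)
      simp
    have := h1.union h2
    rwa [union_compl_self, integrableOn_univ] at this
  refine ⟨hv, ?_⟩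
  have hU : UnifIntegrable w 1 μ := by
    intro ε hε
    obtain ⟨δ, hδ, h⟩ := hui ε hε
    refine ⟨δ, hδ, fun n E hE hEm => ?_⟩
    rw [eLpNorm_indicator_eq_eLpNorm_restrict hE, eLpNorm_one_eq_lintegral_enorm]
    exact h n E hE hEm
  have := tendsto_Lp_finite_of_tendsto_ae le_rfl ENNReal.one_ne_top (fun n => (hw n).1) (memLp_one_iff_integrable.2 hv) hU hlim
  simp only [eLpNorm_one_eq_lintegral_enorm] at this
  exact tendsto_integral_of_L1 v hv.1 (Eventually.of_forall hw) this

/-- sequence of truncation parameters -/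
def eN (n : ℕ) : ℝ := 1 / ((n : ℝ) + 1)

lemma eN_pos (n : ℕ) : 0 < eN n := by unfold eN; positivity

lemma eN_lim : Tendsto eN atTop (𝓝[>] 0) := by
  rw [tendsto_nhdsWithin_iff]
  exact ⟨tendsto_one_div_add_atTop_nhds_zero_nat, Eventually.of_forall eN_pos⟩

lemma qr_cont {u : ℝ → ℝ} (hu : Integrable u μI) {ε : ℝ} (hε : 0 < ε) : Continuous (qr ε u) := by
  have h := Complex.continuous_re.comp (CT_hline hu hε)
  refine h.congr fun t => ?_
  exact CT_re hu t hε

lemma Qc_cont {u : ℝ → ℂ} (hu : Integrable u μI) {ε : ℝ} (hε : 0 < ε) : Continuous (Qc ε u) := by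
  have h : Qc ε u = fun t => (qr ε (fun x => (u x).re) t : ℂ) + (qr ε (fun x => (u x).im) t : ℂ) * Complex.I := by
    ext t; exact Qc_eq hu hε t
  rw [h]
  have h1 := qr_cont hu.re hε
  have h2 := qr_cont hu.im hε
  exact (Complex.continuous_ofReal.comp h1).add ((Complex.continuous_ofReal.comp h2).mul continuous_const)

lemma FHT_seq {u : ℝ → ℂ} (hu : Integrable u μI) :
    ∀ᵐ (t : ℝ) ∂μI, Tendsto (fun n : ℕ => Qc (eN n) u t) atTop (𝓝 (Real.pi * FHT u t)) := by
  filter_upwards [FHT_lim hu] with t ht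
  exact ht.comp eN_lim

lemma FHT_meas {u : ℝ → ℂ} (hu : Integrable u μI) : AEStronglyMeasurable (FHT u) μI := by
  have h := aestronglyMeasurable_of_tendsto_ae (μ := μI) (f := fun n t => Qc (eN n) u t) atTop
    (fun n => (Qc_cont hu (eN_pos n)).aestronglyMeasurable) (FHT_seq hu)
  have h2 := h.const_mul ((Real.pi : ℂ)⁻¹)
  refine h2.congr (Eventually.of_forall fun t => ?_)
  exact inv_mul_cancel_left₀ (by exact_mod_cast Real.pi_ne_zero) _

lemma FHT_nonneg_est {u : ℝ → ℝ} (hu : Integrable u μI) (h0 : ∀ x, 0 ≤ u x) :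
    ∫⁻ (t : ℝ), ENNReal.ofReal (Real.log (1 + ‖Real.pi * FHT (fun x => (u x : ℂ)) t‖ ^ 2) / 2) ∂μI
      ≤ ENNReal.ofReal (2 * Real.pi * ∫ x, u x ∂μI) := by
  have huc : Integrable (fun x => (u x : ℂ)) μI := hu.ofReal
  have hq : ∀ n t, Qc (eN n) (fun x => (u x : ℂ)) t = (qr (eN n) u t : ℂ) := by
    intro n t
    rw [Qc_eq huc (eN_pos n)]
    simp [qr]
  have hcont : Continuous (fun s : ℂ => ENNReal.ofReal (Real.log (1 + ‖s‖ ^ 2) / 2)) := by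
    refine ENNReal.continuous_ofReal.comp (Continuous.div_const (Continuous.log (by fun_prop) ?_) _)
    intro s; positivity
  calc _ = ∫⁻ (t : ℝ), liminf (fun n => ENNReal.ofReal (Real.log (1 + ‖Qc (eN n) (fun x => (u x : ℂ)) t‖ ^ 2) / 2)) atTop ∂μI := by
        refine lintegral_congr_ae ?_
        filter_upwards [FHT_seq huc] with t ht
        exact (((hcont.tendsto _).comp ht).liminf_eq).symm
    _ ≤ liminf (fun n => ∫⁻ (t : ℝ), ENNReal.ofReal (Real.log (1 + ‖Qc (eN n) (fun x => (u x : ℂ)) t‖ ^ 2) / 2) ∂μI) atTop := by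
        refine lintegral_liminf_le fun n => ?_
        exact hcont.measurable.comp (Qc_cont huc (eN_pos n)).measurable
    _ ≤ liminf (fun n : ℕ => ENNReal.ofReal (2 * Real.pi * ∫ x, u x ∂μI)) atTop := by
        refine liminf_le_liminf (Eventually.of_forall fun n => ?_)
        refine (lintegral_mono fun t => ENNReal.ofReal_le_ofReal ?_).trans (E1 hu h0 (eN_pos n))
        have hre := CT_re hu t (eN_pos n)
        have him := CT_im_nonneg hu h0 (z := t + eN n * Complex.I) (by simpa using eN_pos n)
        rw [hq, Complex.norm_real, Real.norm_eq_abs, sq_abs, ← hre]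
        set F := CT u (t + eN n * Complex.I)
        have : ‖1 - Complex.I * F‖ = Real.sqrt (Complex.normSq (1 - Complex.I * F)) := rfl
        rw [this, Real.log_sqrt (Complex.normSq_nonneg _)]
        gcongr
        rw [Complex.normSq_apply]
        simp
        nlinarith
    _ = _ := by simp

lemma FHT_nonneg_lim {u : ℕ → ℝ → ℝ} (hu : ∀ k, Integrable (u k) μI) (h0 : ∀ k x, 0 ≤ u k x)
    (hs : ∀ k, ∫ x, u k x ∂μI ≤ (1/2 : ℝ) ^ k) :
    ∀ᵐ (t : ℝ) ∂μI, Tendsto (fun k => FHT (fun x => (u k x : ℂ)) t) atTop (𝓝 0) := by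
  have hm : ∀ k, AEMeasurable (fun t => ENNReal.ofReal (Real.log (1 + ‖Real.pi * FHT (fun x => (u k x : ℂ)) t‖ ^ 2) / 2)) μI := by
    intro k
    have h1 : AEMeasurable (FHT (fun x => (u k x : ℂ))) μI := (FHT_meas (hu k).ofReal).aemeasurable
    fun_prop
  have hfin : ∫⁻ t, ∑' k, ENNReal.ofReal (Real.log (1 + ‖Real.pi * FHT (fun x => (u k x : ℂ)) t‖ ^ 2) / 2) ∂μI ≠ ⊤ := by
    rw [lintegral_tsum hm]
    have hle : ∀ k, ∫⁻ t, ENNReal.ofReal (Real.log (1 + ‖Real.pi * FHT (fun x => (u k x : ℂ)) t‖ ^ 2) / 2) ∂μI ≤ ENNReal.ofReal (2 * Real.pi * (1/2 : ℝ) ^ k) := by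
      intro k
      refine (FHT_nonneg_est (hu k) (h0 k)).trans (ENNReal.ofReal_le_ofReal ?_)
      exact mul_le_mul_of_nonneg_left (hs k) (by positivity)
    refine ne_top_of_le_ne_top ?_ (ENNReal.tsum_le_tsum hle)
    rw [← ENNReal.ofReal_tsum_of_nonneg (fun k => by positivity) (summable_geometric_two.mul_left _)]
    exact ENNReal.ofReal_ne_top
  filter_upwards [ae_lt_top' (AEMeasurable.tsum hm) hfin] with t ht
  have h1 := ENNReal.tendsto_atTop_zero_of_tsum_ne_top ht.ne
  have h2 : Tendsto (fun k => Real.log (1 + ‖Real.pi * FHT (fun x => (u k x : ℂ)) t‖ ^ 2) / 2) atTop (𝓝 0) := by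
    have := (ENNReal.tendsto_toReal ENNReal.zero_ne_top).comp h1
    refine this.congr fun k => ?_
    refine ENNReal.toReal_ofReal ?_
    have : 0 ≤ Real.log (1 + ‖Real.pi * FHT (fun x => (u k x : ℂ)) t‖ ^ 2) := Real.log_nonneg (by nlinarith [sq_nonneg ‖Real.pi * FHT (fun x => (u k x : ℂ)) t‖])
    positivity
  have h3 := ((Real.continuous_exp.tendsto _).comp (h2.const_mul 2)).sub_const 1
  have h4 : Tendsto (fun k => ‖Real.pi * FHT (fun x => (u k x : ℂ)) t‖ ^ 2) atTop (𝓝 0) := by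
    have e : Real.exp (2 * 0) - 1 = 0 := by simp
    rw [e] at h3
    refine h3.congr fun k => ?_
    simp only [Function.comp]
    rw [mul_div_cancel₀ _ (two_ne_zero), Real.exp_log (by positivity)]
    ring
  have h5 := (Real.continuous_sqrt.tendsto _).comp h4
  rw [Real.sqrt_zero] at h5
  have h6 : Tendsto (fun k => Real.pi * FHT (fun x => (u k x : ℂ)) t) atTop (𝓝 0) := by
    rw [tendsto_zero_iff_norm_tendsto_zero]
    refine h5.congr fun k => ?_
    exact Real.sqrt_sq (norm_nonneg _)
  have h7 := h6.const_mul ((Real.pi : ℂ)⁻¹)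
  rw [mul_zero] at h7
  refine h7.congr fun k => ?_
  exact inv_mul_cancel_left₀ (by exact_mod_cast Real.pi_ne_zero) _

lemma Qc_sub {u v : ℝ → ℂ} (hu : Integrable u μI) (hv : Integrable v μI) {ε : ℝ} (hε : 0 < ε) (t : ℝ) :
    Qc ε (fun x => u x - v x) t = Qc ε u t - Qc ε v t := by
  unfold Qc
  rw [← integral_sub (Qc_int hu hε t) (Qc_int hv hε t)]
  simp only [sub_mul]

lemma Qc_mul (c : ℂ) (u : ℝ → ℂ) (ε t : ℝ) :
    Qc ε (fun x => c * u x) t = c * Qc ε u t := by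
  unfold Qc
  rw [← integral_const_mul]
  simp only [mul_assoc]

lemma pi_cancel {a b : ℂ} (h : (Real.pi : ℂ) * a = Real.pi * b) : a = b :=
  mul_left_cancel₀ (by exact_mod_cast Real.pi_ne_zero) h

lemma FHT_sub {u v : ℝ → ℂ} (hu : Integrable u μI) (hv : Integrable v μI) :
    ∀ᵐ (t : ℝ) ∂μI, FHT (fun x => u x - v x) t = FHT u t - FHT v t := by
  filter_upwards [FHT_seq hu, FHT_seq hv, FHT_seq (hu.sub hv)] with t h1 h2 h3
  apply pi_cancel
  rw [mul_sub]
  refine tendsto_nhds_unique h3 ((h1.sub h2).congr fun n => ?_)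
  exact (Qc_sub hu hv (eN_pos n) t).symm

lemma FHT_mul (c : ℂ) {u : ℝ → ℂ} (hu : Integrable u μI) :
    ∀ᵐ (t : ℝ) ∂μI, FHT (fun x => c * u x) t = c * FHT u t := by
  filter_upwards [FHT_seq hu, FHT_seq (hu.const_mul c)] with t h1 h3
  apply pi_cancel
  rw [mul_left_comm]
  refine tendsto_nhds_unique h3 ((h1.const_mul c).congr fun n => ?_)
  exact (Qc_mul c u _ t).symm

lemma FHT_reim {u : ℝ → ℂ} (hu : Integrable u μI) :
    ∀ᵐ (t : ℝ) ∂μI, FHT u t = FHT (fun x => ((u x).re : ℂ)) t - (-Complex.I) * FHT (fun x => ((u x).im : ℂ)) t := by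
  have h1 : Integrable (fun x => ((u x).re : ℂ)) μI := hu.re.ofReal
  have h2 : Integrable (fun x => ((u x).im : ℂ)) μI := hu.im.ofReal
  filter_upwards [FHT_sub h1 (h2.const_mul (-Complex.I)), FHT_mul (-Complex.I) h2] with t e1 e2
  rw [← e2, ← e1]
  congr 1; ext x
  apply Complex.ext <;> simp

lemma FHT_pm {u : ℝ → ℝ} (hu : Integrable u μI) :
    ∀ᵐ (t : ℝ) ∂μI, FHT (fun x => (u x : ℂ)) t = FHT (fun x => ((max (u x) 0 : ℝ) : ℂ)) t - FHT (fun x => ((max (-u x) 0 : ℝ) : ℂ)) t := by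
  have h1 : Integrable (fun x => ((max (u x) 0 : ℝ) : ℂ)) μI := hu.pos_part.ofReal
  have h2 : Integrable (fun x => ((max (-u x) 0 : ℝ) : ℂ)) μI := hu.neg_part.ofReal
  filter_upwards [FHT_sub h1 h2] with t e1
  rw [← e1]
  congr 1; ext x
  rw [← Complex.ofReal_sub]
  congr 1
  rcases le_total 0 (u x) with h | h
  · rw [max_eq_left h, max_eq_right (by linarith)]; ring
  · rw [max_eq_right h, max_eq_left (by linarith)]; ring

lemma FHT_real_lim {u : ℕ → ℝ → ℝ} (hu : ∀ k, Integrable (u k) μI)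
    (hs : ∀ k, ∫ x, |u k x| ∂μI ≤ (1/2 : ℝ) ^ k) :
    ∀ᵐ (t : ℝ) ∂μI, Tendsto (fun k => FHT (fun x => (u k x : ℂ)) t) atTop (𝓝 0) := by
  have a1 := FHT_nonneg_lim (u := fun k x => max (u k x) 0) (fun k => (hu k).pos_part) (fun k x => le_max_right _ _)
    (fun k => (integral_mono (hu k).pos_part (hu k).abs (fun x => max_le (le_abs_self _) (abs_nonneg _))).trans (hs k))
  have a2 := FHT_nonneg_lim (u := fun k x => max (-u k x) 0) (fun k => (hu k).neg_part) (fun k x => le_max_right _ _)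
    (fun k => (integral_mono (hu k).neg_part (hu k).abs (fun x => max_le (neg_le_abs _) (abs_nonneg _))).trans (hs k))
  have a3 := ae_all_iff.2 fun k => FHT_pm (hu k)
  filter_upwards [a1, a2, a3] with t h1 h2 h3
  have := h1.sub h2
  rw [sub_zero] at this
  exact this.congr fun k => (h3 k).symm

lemma FHT_lim0 {h : ℕ → ℝ → ℂ} (hu : ∀ k, Integrable (h k) μI)
    (hs : ∀ k, ∫ x, ‖h k x‖ ∂μI ≤ (1/2 : ℝ) ^ k) :
    ∀ᵐ (t : ℝ) ∂μI, Tendsto (fun k => FHT (h k) t) atTop (𝓝 0) := by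
  have a1 := FHT_real_lim (u := fun k x => (h k x).re) (fun k => (hu k).re)
    (fun k => (integral_mono (hu k).re.abs (hu k).norm (fun x => Complex.abs_re_le_norm _)).trans (hs k))
  have a2 := FHT_real_lim (u := fun k x => (h k x).im) (fun k => (hu k).im)
    (fun k => (integral_mono (hu k).im.abs (hu k).norm (fun x => Complex.abs_im_le_norm _)).trans (hs k))
  have a3 := ae_all_iff.2 fun k => FHT_reim (hu k)
  filter_upwards [a1, a2, a3] with t h1 h2 h3
  have := h1.sub (h2.const_mul (-Complex.I))
  rw [mul_zero, sub_zero] at this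
  exact this.congr fun k => (h3 k).symm

/-- truncation -/
def trc (N : ℕ) (z : ℂ) : ℂ := if ‖z‖ ≤ N then z else 0

lemma trc_meas (N : ℕ) : Measurable (trc N) :=
  Measurable.ite (measurableSet_le measurable_norm measurable_const) measurable_id measurable_const

lemma trc_norm (N : ℕ) (z : ℂ) : ‖trc N z‖ ≤ N := by
  unfold trc; split_ifs with h
  · exact h
  · simp

lemma trc_norm_le (N : ℕ) (z : ℂ) : ‖trc N z‖ ≤ ‖z‖ := by
  unfold trc; split_ifs with h
  · exact le_rfl
  · simp

lemma trc_sub_norm_le (N : ℕ) (z : ℂ) : ‖z - trc N z‖ ≤ ‖z‖ := by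
  unfold trc; split_ifs with h
  · simp
  · simp

lemma trc_lim (z : ℂ) : ∀ᶠ N in atTop, trc N z = z := by
  filter_upwards [eventually_ge_atTop ⌈‖z‖⌉₊] with N hN
  exact if_pos ((Nat.le_ceil _).trans (by exact_mod_cast hN))

lemma trc_int {f : ℝ → ℂ} (hf : AEStronglyMeasurable f μI) (N : ℕ) : Integrable (fun x => trc N (f x)) μI := by
  refine (integrable_const (N : ℝ)).mono' ((trc_meas N).comp_aemeasurable hf.aemeasurable).aestronglyMeasurable ?_
  exact Eventually.of_forall fun x => trc_norm N _

lemma FHT_trunc {f : ℝ → ℂ} (hf : Integrable f μI) :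
    ∃ n : ℕ → ℕ, (∀ k, k ≤ n k) ∧
      ∀ᵐ (t : ℝ) ∂μI, Tendsto (fun k => FHT (fun x => trc (n k) (f x)) t) atTop (𝓝 (FHT f t)) := by
  have h0 : Tendsto (fun N => ∫ x, ‖f x - trc N (f x)‖ ∂μI) atTop (𝓝 (∫ x, (0:ℝ) ∂μI)) := by
    refine tendsto_integral_of_dominated_convergence (fun x => ‖f x‖) (fun N => (hf.sub (trc_int hf.1 N)).norm.1) hf.norm ?_ ?_
    · intro N; exact Eventually.of_forall fun x => by rw [norm_norm]; exact trc_sub_norm_le _ _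
    · refine Eventually.of_forall fun x => ?_
      refine tendsto_const_nhds.congr' ?_
      filter_upwards [trc_lim (f x)] with N hN
      rw [hN]; simp
  rw [integral_zero] at h0
  have h1 : ∀ k : ℕ, ∃ n : ℕ, k ≤ n ∧ ∫ x, ‖f x - trc n (f x)‖ ∂μI ≤ (1/2 : ℝ) ^ k := by
    intro k
    have := (h0.eventually (ge_mem_nhds (by positivity : (0:ℝ) < (1/2) ^ k))).and (eventually_ge_atTop k)
    obtain ⟨n, hn, hk⟩ := this.exists
    exact ⟨n, hk, hn⟩
  choose n hn hn2 using h1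
  refine ⟨n, hn, ?_⟩
  have a1 := FHT_lim0 (fun k => hf.sub (trc_int hf.1 (n k))) hn2
  have a2 := ae_all_iff.2 fun k => FHT_sub hf (trc_int hf.1 (n k))
  filter_upwards [a1, a2] with t h1 h2
  have := (tendsto_const_nhds (x := FHT f t)).sub h1
  rw [sub_zero] at this
  refine this.congr fun k => ?_
  have := h2 k
  change FHT f t - FHT (fun x => f x - trc (n k) (f x)) t = _
  rw [this]; ring

lemma C2_pos : 0 < C2 := by unfold C2; positivity

lemma bdd_int {h : ℝ → ℂ} (hm : AEStronglyMeasurable h μI) (h1 : ∀ x, ‖h x‖ ≤ 1) : Integrable h μI :=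
  (integrable_const (1 : ℝ)).mono' hm (Eventually.of_forall h1)

lemma exp_real {u : ℝ → ℝ} (hu : Integrable u μI) (h0 : ∀ x, |u x| ≤ 1) {δ : ℝ} (hδ : 0 < δ) :
    ∫⁻ t : ℝ, ENNReal.ofReal (Real.exp (|qr δ u t| / 4)) ∂μI ≤ ENNReal.ofReal (2 * C2) := by
  have h1 := E2 hu h0 hδ
  have h2 := E2 hu.neg (fun x => by simpa using h0 x) hδ
  have hn : ∀ t, qr δ (-u) t = - qr δ u t := by
    intro t; unfold qr; rw [← integral_neg]; simp
  simp only [hn] at h2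
  calc _ ≤ ∫⁻ t : ℝ, (ENNReal.ofReal (Real.exp (qr δ u t / 4)) + ENNReal.ofReal (Real.exp (-qr δ u t / 4))) ∂μI := by
        refine lintegral_mono fun t => ?_
        rcases abs_cases (qr δ u t) with h | h
        · simp only [h.1]; exact le_self_add
        · simp only [h.1]; exact le_add_self
    _ ≤ _ := by
        rw [lintegral_add_left' (by have := (qr_cont hu hδ).measurable; fun_prop), two_mul,
          ENNReal.ofReal_add C2_pos.le C2_pos.le]
        exact add_le_add h1 h2

lemma exp_est {h : ℝ → ℂ} (hm : AEStronglyMeasurable h μI) (h1 : ∀ x, ‖h x‖ ≤ 1) {δ : ℝ} (hδ : 0 < δ) :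
    ∫⁻ t : ℝ, ENNReal.ofReal (Real.exp (‖Qc δ h t‖ / 8)) ∂μI ≤ ENNReal.ofReal (4 * C2) := by
  have hi := bdd_int hm h1
  have a1 := exp_real hi.re (fun x => (Complex.abs_re_le_norm _).trans (h1 x)) hδ
  have a2 := exp_real hi.im (fun x => (Complex.abs_im_le_norm _).trans (h1 x)) hδ
  calc _ ≤ ∫⁻ t : ℝ, (ENNReal.ofReal (Real.exp (|qr δ (fun x => RCLike.re (h x)) t| / 4)) + ENNReal.ofReal (Real.exp (|qr δ (fun x => RCLike.im (h x)) t| / 4))) ∂μI := by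
        refine lintegral_mono fun t => ?_
        rw [← ENNReal.ofReal_add (by positivity) (by positivity)]
        apply ENNReal.ofReal_le_ofReal
        have e := Qc_eq hi hδ t
        have e2 : ‖Qc δ h t‖ ≤ |qr δ (fun x => RCLike.re (h x)) t| + |qr δ (fun x => RCLike.im (h x)) t| := by
          rw [e]
          refine (norm_add_le _ _).trans ?_
          rw [norm_mul, Complex.norm_I, mul_one, Complex.norm_real, Complex.norm_real]
          exact le_rfl
        set a := |qr δ (fun x => RCLike.re (h x)) t|
        set b := |qr δ (fun x => RCLike.im (h x)) t|
        rcases le_total a b with hab | hab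
        · have : Real.exp (‖Qc δ h t‖ / 8) ≤ Real.exp (b / 4) := Real.exp_le_exp.2 (by linarith)
          have := Real.exp_pos (a / 4)
          linarith
        · have : Real.exp (‖Qc δ h t‖ / 8) ≤ Real.exp (a / 4) := Real.exp_le_exp.2 (by linarith)
          have := Real.exp_pos (b / 4)
          linarith
    _ ≤ _ := by
        rw [lintegral_add_left' (by have := (qr_cont hi.re hδ).measurable; fun_prop)]
        refine (add_le_add a1 a2).trans ?_
        rw [← ENNReal.ofReal_add (by have := C2_pos; positivity) (by have := C2_pos; positivity)]
        apply le_of_eq; congr 1; ring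

/-- Young function -/
def GG (η : ℝ) (z : ℂ) : ℝ := ‖z‖ * (max (Real.log ‖z‖) 0 + Real.log η⁻¹)

lemma young {η : ℝ} (hη : 0 < η) (z : ℂ) {b : ℝ} :
    ‖z‖ * b ≤ GG η z + η * Real.exp b := by
  unfold GG
  rcases eq_or_ne z 0 with rfl | hz
  · simp; positivity
  have ha : 0 < ‖z‖ := norm_pos_iff.2 hz
  set a := ‖z‖
  have h1 := Real.add_one_le_exp (b - Real.log a - Real.log η⁻¹)
  have h2 : Real.exp (b - Real.log a - Real.log η⁻¹) = Real.exp b / a * η := by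
    rw [Real.exp_sub, Real.exp_sub, Real.exp_log ha, Real.exp_log (by positivity), div_inv_eq_mul]
  rw [h2] at h1
  have h3 := mul_le_mul_of_nonneg_left h1 ha.le
  have h4 : a * (Real.exp b / a * η) = η * Real.exp b := by field_simp
  rw [h4] at h3
  have h5 : a * Real.log a ≤ a * max (Real.log a) 0 := mul_le_mul_of_nonneg_left (le_max_left _ _) ha.le
  nlinarith

lemma GG_nonneg {η : ℝ} (hη : 0 < η) (h1 : η ≤ 1) (z : ℂ) : 0 ≤ GG η z := by
  unfold GG
  have : 0 ≤ Real.log η⁻¹ := Real.log_nonneg (one_le_inv_iff₀.2 ⟨hη, h1⟩)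
  have := le_max_right (Real.log ‖z‖) 0
  positivity

lemma key_est {h : ℝ → ℂ} (hm : AEStronglyMeasurable h μI) (h1 : ∀ x, ‖h x‖ ≤ 1) {δ : ℝ} (hδ : 0 < δ)
    {g : ℝ → ℂ} {η : ℝ} (hη : 0 < η) (hη1 : η ≤ 1) (E : Set ℝ) :
    ∫⁻ t in E, ‖g t‖ₑ * ‖Qc δ h t‖ₑ ∂μI ≤
      8 * (∫⁻ t in E, ENNReal.ofReal (GG η (g t)) ∂μI + ENNReal.ofReal (η * (4 * C2))) := by
  have hQ := (Qc_cont (bdd_int hm h1) hδ).measurable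
  have hpt : ∀ t, ‖g t‖ₑ * ‖Qc δ h t‖ₑ ≤ 8 * (ENNReal.ofReal (GG η (g t)) + ENNReal.ofReal η * ENNReal.ofReal (Real.exp (‖Qc δ h t‖ / 8))) := by
    intro t
    rw [← ofReal_norm, ← ofReal_norm, ← ENNReal.ofReal_mul (norm_nonneg _), ← ENNReal.ofReal_mul hη.le,
      ← ENNReal.ofReal_add (GG_nonneg hη hη1 _) (by positivity)]
    have : (8 : ENNReal) = ENNReal.ofReal 8 := by simp
    rw [this, ← ENNReal.ofReal_mul (by norm_num)]
    apply ENNReal.ofReal_le_ofReal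
    have := young hη (g t) (b := ‖Qc δ h t‖ / 8)
    linarith
  refine (lintegral_mono hpt).trans ?_
  rw [lintegral_const_mul' _ _ (by simp)]
  gcongr
  rw [lintegral_add_right _ (by fun_prop), lintegral_const_mul' _ _ ENNReal.ofReal_ne_top]
  gcongr
  rw [ENNReal.ofReal_mul hη.le]
  gcongr
  exact (setLIntegral_le_lintegral _ _).trans (exp_est hm h1 hδ)

lemma Qc_norm_le {u : ℝ → ℂ} (hu : Integrable u μI) {ε : ℝ} (hε : 0 < ε) (t : ℝ) :
    ‖Qc ε u t‖ ≤ (∫ x, ‖u x‖ ∂μI) * ε⁻¹ := by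
  unfold Qc
  rw [← integral_mul_const]
  refine norm_integral_le_of_norm_le (hu.norm.mul_const _) (Eventually.of_forall fun x => ?_)
  rw [norm_mul, Complex.norm_real]
  exact mul_le_mul_of_nonneg_left (qk_bound hε) (norm_nonneg _)

lemma Qc_integrable {u : ℝ → ℂ} (hu : Integrable u μI) {ε : ℝ} (hε : 0 < ε) : Integrable (Qc ε u) μI :=
  (integrable_const _).mono' (Qc_cont hu hε).aestronglyMeasurable (Eventually.of_forall (Qc_norm_le hu hε))

lemma mul_Qc_integrable {f u : ℝ → ℂ} (hf : Integrable f μI) (hu : Integrable u μI) {ε : ℝ} (hε : 0 < ε) :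
    Integrable (fun t => f t * Qc ε u t) μI :=
  hf.mul_bdd (Qc_cont hu hε).aestronglyMeasurable (Eventually.of_forall (Qc_norm_le hu hε))

lemma antisym {f g : ℝ → ℂ} (hf : Integrable f μI) (hg : Integrable g μI) {ε : ℝ} (hε : 0 < ε) :
    ∫ t, f t * Qc ε g t ∂μI = - ∫ t, g t * Qc ε f t ∂μI := by
  unfold Qc
  simp only [← integral_const_mul]
  have hint : Integrable (Function.uncurry fun t x : ℝ => f t * (g x * (((x - t) / ((x - t) ^ 2 + ε ^ 2) : ℝ) : ℂ))) (μI.prod μI) := by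
    have h1 := (hf.mul_prod hg).mul_bdd (c := ε⁻¹) (g := fun p : ℝ × ℝ => (((p.2 - p.1) / ((p.2 - p.1) ^ 2 + ε ^ 2) : ℝ) : ℂ)) ?_ ?_
    · refine h1.congr (Eventually.of_forall fun p => ?_)
      simp only [Function.uncurry]; ring
    · have := (qk_cont hε).comp continuous_swap
      exact (Complex.continuous_ofReal.comp this).aestronglyMeasurable
    · refine Eventually.of_forall fun p => ?_
      rw [Complex.norm_real]
      exact qk_bound hε
  rw [integral_integral_swap hint, ← integral_neg]
  congr 1; ext x
  rw [← integral_neg]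
  congr 1; ext t
  have : (t - x) / ((t - x) ^ 2 + ε ^ 2) = - ((x - t) / ((x - t) ^ 2 + ε ^ 2)) := by
    rw [← neg_sub x t, neg_sq, neg_div]
  rw [this]; push_cast; ring

lemma LlogL_int {g : ℝ → ℂ} (hg : MemLlogL g) : Integrable g μI := by
  have h2 : Integrable (fun x => ‖g x‖ * max (Real.log ‖g x‖) 0) μI := hg.2
  refine ((integrable_const (Real.exp 1)).add h2).mono' hg.1 (Eventually.of_forall fun x => ?_)
  simp only [Pi.add_apply]
  rcases le_total ‖g x‖ (Real.exp 1) with h | h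
  · have : 0 ≤ ‖g x‖ * max (Real.log ‖g x‖) 0 := mul_nonneg (norm_nonneg _) (le_max_right _ _)
    linarith
  · have h3 : 1 ≤ Real.log ‖g x‖ := by rwa [Real.le_log_iff_exp_le ((Real.exp_pos 1).trans_le h)]
    have : ‖g x‖ * 1 ≤ ‖g x‖ * max (Real.log ‖g x‖) 0 := mul_le_mul_of_nonneg_left (h3.trans (le_max_left _ _)) (norm_nonneg _)
    have := Real.exp_pos 1
    linarith

lemma GG_int {g : ℝ → ℂ} (hg : MemLlogL g) (η : ℝ) : Integrable (fun x => GG η (g x)) μI := by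
  have h2 : Integrable (fun x => ‖g x‖ * max (Real.log ‖g x‖) 0) μI := hg.2
  refine (h2.add ((LlogL_int hg).norm.mul_const (Real.log η⁻¹))).congr (Eventually.of_forall fun x => ?_)
  simp only [GG, Pi.add_apply]; ring

lemma dual_est {v : ℝ → ℂ} (hv : Integrable v μI) {δ : ℝ} (hδ : 0 < δ) {η : ℝ} (hη : 0 < η) (hη1 : η ≤ 1) :
    ∫⁻ t, ‖Qc δ v t‖ₑ ∂μI ≤
      8 * (∫⁻ t, ENNReal.ofReal (GG η (v t)) ∂μI + ENNReal.ofReal (η * (4 * C2))) := by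
  have hQ := (Qc_cont hv hδ).measurable
  set s : ℝ → ℂ := fun t => (starRingEnd ℂ) (Qc δ v t) * ((‖Qc δ v t‖⁻¹ : ℝ) : ℂ) with hs
  have hsm : Measurable s := (Complex.continuous_conj.measurable.comp hQ).mul (Complex.measurable_ofReal.comp hQ.norm.inv)
  have hs1 : ∀ t, ‖s t‖ ≤ 1 := by
    intro t
    simp only [hs]
    rw [norm_mul, RCLike.norm_conj, Complex.norm_real, norm_inv, norm_norm]
    exact mul_inv_le_one
  have hsQ : ∀ t, s t * Qc δ v t = (‖Qc δ v t‖ : ℂ) := by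
    intro t
    simp only [hs]
    rw [mul_right_comm, mul_comm ((starRingEnd ℂ) _), Complex.mul_conj, Complex.normSq_eq_norm_sq, ← Complex.ofReal_mul]
    congr 1
    rcases eq_or_ne ‖Qc δ v t‖ 0 with h | h
    · rw [h]; simp
    · field_simp
  have hsi := bdd_int hsm.aestronglyMeasurable hs1
  have e1 := antisym hsi hv hδ
  simp only [hsQ] at e1
  rw [integral_complex_ofReal] at e1
  have e2 : ∫⁻ t, ‖Qc δ v t‖ₑ ∂μI = ‖∫ t, v t * Qc δ s t ∂μI‖ₑ := by
    rw [← enorm_neg, ← e1, ← ofReal_norm, Complex.norm_real, Real.norm_of_nonneg (integral_nonneg fun _ => norm_nonneg _),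
      ofReal_integral_norm_eq_lintegral_enorm (Qc_integrable hv hδ)]
  rw [e2]
  refine (enorm_integral_le_lintegral_enorm _).trans ?_
  have := key_est hsm.aestronglyMeasurable hs1 hδ (g := v) hη hη1 univ
  simp only [Measure.restrict_univ] at this
  simpa only [enorm_mul] using this

/-- small absolute continuity -/
lemma abs_cont {G : ℝ → ℝ} (hG : Integrable G μI) {ε : ℝ} (hε : 0 < ε) :
    ∃ δ : ℝ, 0 < δ ∧ ∀ E, MeasurableSet E → μI E ≤ ENNReal.ofReal δ → ∫⁻ x in E, ENNReal.ofReal (G x) ∂μI ≤ ENNReal.ofReal ε := by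
  have hfin : ∫⁻ x, ENNReal.ofReal (G x) ∂μI ≠ ⊤ := by
    refine ne_top_of_le_ne_top hG.2.ne (lintegral_mono fun x => ?_)
    rw [← ofReal_norm]
    exact ENNReal.ofReal_le_ofReal (le_abs_self _)
  obtain ⟨δ, hδ, h⟩ := exists_pos_setLIntegral_lt_of_measure_lt hfin (ε := ENNReal.ofReal ε) (by simpa using hε)
  obtain ⟨r, hr, hrδ⟩ := ENNReal.lt_iff_exists_real_btwn.1 hδ
  refine ⟨r, by simpa using hrδ.1, fun E _ hE => (h E (hE.trans_lt hrδ.2)).le⟩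

lemma eta_choice {ε K : ℝ} (hε : 0 < ε) (hK : 0 ≤ K) : ∃ η : ℝ, 0 < η ∧ η ≤ 1 ∧ η * K ≤ ε := by
  refine ⟨min 1 (ε / (K + 1)), by positivity, min_le_left _ _, ?_⟩
  calc min 1 (ε / (K + 1)) * K ≤ ε / (K + 1) * K := by gcongr; exact min_le_right _ _
    _ ≤ ε / (K + 1) * (K + 1) := by gcongr; linarith
    _ = ε := by field_simp

lemma UI1 {h g : ℝ → ℂ} (hm : AEStronglyMeasurable h μI) (h1 : ∀ x, ‖h x‖ ≤ 1) (hg : MemLlogL g) (ε : ℝ) (hε : 0 < ε) :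
    ∃ δ : ℝ, 0 < δ ∧ ∀ (n : ℕ) E, MeasurableSet E → μI E ≤ ENNReal.ofReal δ →
      ∫⁻ x in E, ‖g x * Qc (eN n) h x‖ₑ ∂μI ≤ ENNReal.ofReal ε := by
  obtain ⟨η, h0, hη1, hη⟩ := eta_choice (ε := ε / 16) (K := 4 * C2) (by positivity) (by have := C2_pos; positivity)
  obtain ⟨δ, hδ, h⟩ := abs_cont (GG_int hg η) (ε := ε / 16) (by positivity)
  refine ⟨δ, hδ, fun n E hE hEm => ?_⟩
  simp only [enorm_mul]
  refine (key_est hm h1 (eN_pos n) h0 hη1 E).trans ?_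
  calc _ ≤ 8 * (ENNReal.ofReal (ε / 16) + ENNReal.ofReal (ε / 16)) := by
        gcongr
        exact h E hE hEm
    _ = _ := by
        have : (8 : ENNReal) = ENNReal.ofReal 8 := by simp
        rw [this, ← ENNReal.ofReal_add (by positivity) (by positivity), ← ENNReal.ofReal_mul (by norm_num)]
        congr 1; ring

lemma GG_zero (η : ℝ) : GG η 0 = 0 := by simp [GG]

lemma GG_meas (η : ℝ) : Measurable (GG η) := by unfold GG; fun_prop

lemma UI2 {g : ℝ → ℂ} (hg : MemLlogL g) (ε : ℝ) (hε : 0 < ε) :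
    ∃ δ : ℝ, 0 < δ ∧ ∀ (n : ℕ) E, MeasurableSet E → μI E ≤ ENNReal.ofReal δ →
      ∫⁻ x in E, ‖Qc (eN n) g x‖ₑ ∂μI ≤ ENNReal.ofReal ε := by
  have hgi := LlogL_int hg
  obtain ⟨η, h0, hη1, hη⟩ := eta_choice (ε := ε / 32) (K := 4 * C2) (by positivity) (by have := C2_pos; positivity)
  have hG := GG_int hg η
  have hlim : Tendsto (fun N => ∫⁻ x, ENNReal.ofReal (GG η (g x - trc N (g x))) ∂μI) atTop (𝓝 (∫⁻ x, 0 ∂μI)) := by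
    refine tendsto_lintegral_of_dominated_convergence' (fun x => ENNReal.ofReal (GG η (g x))) (fun N => ?_) (fun N => Eventually.of_forall fun x => ?_) ?_ (Eventually.of_forall fun x => ?_)
    · have := ((GG_meas η).comp_aemeasurable (hgi.sub (trc_int hgi.1 N)).1.aemeasurable).ennreal_ofReal
      exact this
    · apply ENNReal.ofReal_le_ofReal
      unfold trc
      split_ifs
      · rw [sub_self, GG_zero]; exact GG_nonneg h0 hη1 _
      · rw [sub_zero]
    · refine ne_top_of_le_ne_top hG.2.ne (lintegral_mono fun x => ?_)
      rw [← ofReal_norm]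
      exact ENNReal.ofReal_le_ofReal (le_abs_self _)
    · refine tendsto_const_nhds.congr' ?_
      filter_upwards [trc_lim (g x)] with N hN
      rw [hN, sub_self, GG_zero]; simp
  rw [lintegral_zero] at hlim
  obtain ⟨N, hN⟩ := (hlim.eventually (ge_mem_nhds (show (0:ENNReal) < ENNReal.ofReal (ε / 32) by simp; positivity))).exists
  have hMp : (0:ℝ) < (N:ℝ) + 1 := by positivity
  set h : ℝ → ℂ := fun x => (((N : ℝ) + 1)⁻¹ : ℝ) * trc N (g x) with hh
  have hhi : Integrable h μI := (trc_int hgi.1 N).const_mul _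
  have hh1 : ∀ x, ‖h x‖ ≤ 1 := by
    intro x
    simp only [hh]
    rw [norm_mul, Complex.norm_real, norm_inv, Real.norm_of_nonneg hMp.le, inv_mul_le_one₀ hMp]
    linarith [trc_norm N (g x)]
  obtain ⟨η', h0', hη1', hη'⟩ := eta_choice (ε := ε / 32 / (N+1)) (K := 4 * C2) (by positivity) (by have := C2_pos; positivity)
  obtain ⟨δ, hδ, hE2⟩ := abs_cont (integrable_const (GG η' 1)) (ε := ε / 32 / (N+1)) (by positivity)
  refine ⟨δ, hδ, fun n E hE hEm => ?_⟩
  have hb := key_est hhi.1 hh1 (eN_pos n) (g := fun _ => 1) h0' hη1' E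
  have hv : Integrable (fun x => g x - trc N (g x)) μI := hgi.sub (trc_int hgi.1 N)
  have hd := dual_est hv (eN_pos n) h0 hη1
  have hdec : ∀ x, ‖Qc (eN n) g x‖ₑ ≤ ENNReal.ofReal (N + 1) * (‖(1:ℂ)‖ₑ * ‖Qc (eN n) h x‖ₑ) + ‖Qc (eN n) (fun x => g x - trc N (g x)) x‖ₑ := by
    intro x
    have e1 := Qc_sub hgi (trc_int hgi.1 N) (eN_pos n) x
    have e2 := Qc_mul (((N : ℝ) + 1)⁻¹ : ℝ) (fun x => trc N (g x)) (eN n) x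
    have e3 : Qc (eN n) (fun x => trc N (g x)) x = ((N + 1 : ℝ) : ℂ) * Qc (eN n) h x := by
      rw [hh, e2, ← mul_assoc, ← Complex.ofReal_mul, mul_inv_cancel₀ hMp.ne']; simp
    have e4 : Qc (eN n) g x = ((N + 1 : ℝ) : ℂ) * Qc (eN n) h x + Qc (eN n) (fun x => g x - trc N (g x)) x := by
      rw [e1, e3]; ring
    rw [e4]
    refine (enorm_add_le _ _).trans ?_
    gcongr
    rw [enorm_mul, ← ofReal_norm, Complex.norm_real, Real.norm_of_nonneg hMp.le]
    simp
  refine (lintegral_mono hdec).trans ?_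
  have hQm := (Qc_cont hhi (eN_pos n)).measurable
  rw [lintegral_add_left (by fun_prop), lintegral_const_mul' _ _ ENNReal.ofReal_ne_top]
  calc _ ≤ ENNReal.ofReal (N + 1) * (8 * (ENNReal.ofReal (ε / 32 / (N + 1)) + ENNReal.ofReal (ε / 32 / (N + 1))))
        + 8 * (ENNReal.ofReal (ε / 32) + ENNReal.ofReal (ε / 32)) := by
        refine add_le_add (mul_le_mul' le_rfl (hb.trans ?_)) ((setLIntegral_le_lintegral _ _).trans (hd.trans ?_))
        · gcongr
          exact hE2 E hE hEm
        · gcongr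
    _ = _ := by
        have : (8 : ENNReal) = ENNReal.ofReal 8 := by simp
        rw [this, ← ENNReal.ofReal_add (by positivity) (by positivity), ← ENNReal.ofReal_add (by positivity) (by positivity), ← ENNReal.ofReal_mul (by norm_num), ← ENNReal.ofReal_mul hMp.le, ← ENNReal.ofReal_mul (by norm_num), ← ENNReal.ofReal_add (by positivity) (by positivity)]
        congr 1; field_simp; ring

lemma parseval_one {f g : ℝ → ℂ} (hm : AEStronglyMeasurable f μI) (h1 : ∀ x, ‖f x‖ ≤ 1) (hg : MemLlogL g) :
    Integrable (fun t => g t * FHT f t) μI ∧ ∫ t, f t * FHT g t ∂μI = - ∫ t, g t * FHT f t ∂μI := by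
  have hfi := bdd_int hm h1
  have hgi := LlogL_int hg
  have A := ui_limit (w := fun n t => g t * Qc (eN n) f t) (v := fun t => g t * (Real.pi * FHT f t)) (μ := μI)
    (fun n => mul_Qc_integrable hgi hfi (eN_pos n))
    (by filter_upwards [FHT_seq hfi] with t ht using ht.const_mul _) (UI1 hm h1 hg)
  have B := ui_limit (w := fun n t => f t * Qc (eN n) g t) (v := fun t => f t * (Real.pi * FHT g t)) (μ := μI)
    (fun n => mul_Qc_integrable hfi hgi (eN_pos n))
    (by filter_upwards [FHT_seq hgi] with t ht using ht.const_mul _) (by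
      intro ε hε
      obtain ⟨δ, hδ, h⟩ := UI2 hg ε hε
      refine ⟨δ, hδ, fun n E hE hEm => (lintegral_mono fun x => ?_).trans (h n E hE hEm)⟩
      rw [enorm_mul]
      refine mul_le_of_le_one_left zero_le ?_
      rw [← ofReal_norm]
      exact ENNReal.ofReal_le_one.2 (h1 x))
  have e := tendsto_nhds_unique (B.2.congr fun n => antisym hfi hgi (eN_pos n)) A.2.neg
  constructor
  · refine (A.1.const_mul ((Real.pi : ℂ)⁻¹)).congr (Eventually.of_forall fun t => ?_)
    simp only
    rw [mul_left_comm (g t), inv_mul_cancel_left₀ (by exact_mod_cast Real.pi_ne_zero)]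
  · apply pi_cancel
    rw [mul_neg, ← integral_const_mul, ← integral_const_mul]
    simp only [mul_left_comm (Real.pi : ℂ)]
    exact e

lemma parseval_bdd {f g : ℝ → ℂ} (hm : AEStronglyMeasurable f μI) (N : ℕ) (h1 : ∀ x, ‖f x‖ ≤ N) (hg : MemLlogL g) :
    Integrable (fun t => g t * FHT f t) μI ∧ ∫ t, f t * FHT g t ∂μI = - ∫ t, g t * FHT f t ∂μI := by
  have hMp : (0:ℝ) < (N:ℝ) + 1 := by positivity
  have hMne : (((N : ℝ) + 1 : ℝ) : ℂ) ≠ 0 := by exact_mod_cast hMp.ne'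
  set h : ℝ → ℂ := fun x => (((N : ℝ) + 1)⁻¹ : ℝ) * f x with hh
  have hhm : AEStronglyMeasurable h μI := hm.const_mul _
  have hh1 : ∀ x, ‖h x‖ ≤ 1 := by
    intro x
    simp only [hh]
    rw [norm_mul, Complex.norm_real, norm_inv, Real.norm_of_nonneg hMp.le, inv_mul_le_one₀ hMp]
    linarith [h1 x]
  have hfh : ∀ x, f x = (((N : ℝ) + 1 : ℝ) : ℂ) * h x := by
    intro x; simp only [hh]
    rw [Complex.ofReal_inv, mul_inv_cancel_left₀ hMne]
  have hF : ∀ᵐ t ∂μI, FHT f t = (((N : ℝ) + 1 : ℝ) : ℂ) * FHT h t := by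
    have : f = fun x => (((N : ℝ) + 1 : ℝ) : ℂ) * h x := funext hfh
    rw [this]
    have e := FHT_mul (((N : ℝ) + 1 : ℝ) : ℂ) (bdd_int hhm hh1)
    exact e
  obtain ⟨A, B⟩ := parseval_one hhm hh1 hg
  have hcong : (fun t => g t * FHT f t) =ᵐ[μI] fun t => (((N : ℝ) + 1 : ℝ) : ℂ) * (g t * FHT h t) := by
    filter_upwards [hF] with t ht
    rw [ht]; ring
  refine ⟨(A.const_mul _).congr hcong.symm, ?_⟩
  rw [integral_congr_ae hcong, integral_const_mul, ← mul_neg, ← B, ← integral_const_mul]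
  congr 1; ext t
  rw [hfh t, mul_assoc]

/-- classes of indicator functions -/
def IndS : Set (Lp ℝ 1 μI) := {F | ∀ᵐ (x : ℝ) ∂μI, F x = 0 ∨ F x = 1}

lemma IndS_closed : IsClosed IndS := by
  refine IsSeqClosed.isClosed ?_
  intro F G hF hG
  have h1 := tendstoInMeasure_of_tendsto_Lp hG
  obtain ⟨ns, -, h2⟩ := h1.exists_seq_tendsto_ae
  have h3 : ∀ᵐ (x : ℝ) ∂μI, ∀ n, F n x = 0 ∨ F n x = 1 := ae_all_iff.2 fun n => hF n
  change ∀ᵐ (x : ℝ) ∂μI, G x = 0 ∨ G x = 1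
  filter_upwards [h2, h3] with x hx1 hx2
  have hc : IsClosed ({0, 1} : Set ℝ) := (Set.toFinite _).isClosed
  have := hc.mem_of_tendsto hx1 (Eventually.of_forall fun n => by simpa using hx2 (ns n))
  simpa using this

/-- indicator as an element -/
def toS {A : Set ℝ} (hA : MeasurableSet A) : IndS :=
  ⟨indicatorConstLp 1 hA (measure_ne_top μI A) (1:ℝ), by
    change ∀ᵐ (x : ℝ) ∂μI, _
    filter_upwards [indicatorConstLp_coeFn (p := 1) (hs := hA) (hμs := measure_ne_top μI A) (c := (1:ℝ))] with x hx
    rw [hx]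
    by_cases h : x ∈ A
    · right; simp [h]
    · left; simp [h]⟩

lemma toS_coe {A : Set ℝ} (hA : MeasurableSet A) :
    ∀ᵐ (x : ℝ) ∂μI, (toS hA : Lp ℝ 1 μI) x = A.indicator (fun _ => (1:ℝ)) x :=
  indicatorConstLp_coeFn (p := 1) (hs := hA) (hμs := measure_ne_top μI A) (c := (1:ℝ))

/-- pairing -/
def Phi (w : ℝ → ℂ) (F : IndS) : ℂ := ∫ x, (((F : Lp ℝ 1 μI) x : ℝ) : ℂ) * w x ∂μI

lemma Phi_toS (w : ℝ → ℂ) {A : Set ℝ} (hA : MeasurableSet A) : Phi w (toS hA) = ∫ x in A, w x ∂μI := by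
  unfold Phi
  rw [← integral_indicator hA]
  refine integral_congr_ae ?_
  filter_upwards [toS_coe hA] with x hx
  rw [hx]
  by_cases h : x ∈ A <;> simp [h]

lemma exists_toS (F : IndS) : ∃ (A : Set ℝ) (hA : MeasurableSet A), F = toS hA := by
  have hm : StronglyMeasurable (F : Lp ℝ 1 μI) := Lp.stronglyMeasurable _
  refine ⟨{x | (F : Lp ℝ 1 μI) x = 1}, measurableSet_eq_fun hm.measurable measurable_const, ?_⟩
  apply Subtype.ext
  apply Lp.ext
  have hF : ∀ᵐ (x : ℝ) ∂μI, (F : Lp ℝ 1 μI) x = 0 ∨ (F : Lp ℝ 1 μI) x = 1 := F.2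
  filter_upwards [hF, toS_coe (measurableSet_eq_fun hm.measurable (measurable_const (a := (1:ℝ))))] with x hx1 hx2
  rw [hx2]
  rcases hx1 with h | h
  · rw [indicator_of_notMem, h]
    rw [mem_ofPred_eq, h]; norm_num
  · rw [indicator_of_mem, h]
    exact h

lemma Phi_int {w : ℝ → ℂ} (hw : Integrable w μI) (F : IndS) :
    Integrable (fun x => (((F : Lp ℝ 1 μI) x : ℝ) : ℂ) * w x) μI := by
  have hF : ∀ᵐ (x : ℝ) ∂μI, (F : Lp ℝ 1 μI) x = 0 ∨ (F : Lp ℝ 1 μI) x = 1 := F.2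
  refine hw.bdd_mul (c := 1) (Complex.continuous_ofReal.comp_aestronglyMeasurable (Lp.aestronglyMeasurable _)) ?_
  filter_upwards [hF] with x hx
  rw [Complex.norm_real]
  rcases hx with h | h <;> simp [h]

lemma IndS_dist (F G : IndS) : dist F G = ∫ x, ‖(F : Lp ℝ 1 μI) x - (G : Lp ℝ 1 μI) x‖ ∂μI := by
  rw [Subtype.dist_eq, L1.dist_eq_integral_dist]
  simp only [dist_eq_norm]

lemma Phi_sub {w : ℝ → ℂ} (hw : Integrable w μI) (F G : IndS) (M : ℕ) :
    ‖Phi w F - Phi w G‖ ≤ M * dist F G + ∫ x, ‖w x - trc M (w x)‖ ∂μI := by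
  have hF : ∀ᵐ (x : ℝ) ∂μI, (F : Lp ℝ 1 μI) x = 0 ∨ (F : Lp ℝ 1 μI) x = 1 := F.2
  have hG : ∀ᵐ (x : ℝ) ∂μI, (G : Lp ℝ 1 μI) x = 0 ∨ (G : Lp ℝ 1 μI) x = 1 := G.2
  have hi : Integrable (fun x => ‖(F : Lp ℝ 1 μI) x - (G : Lp ℝ 1 μI) x‖) μI :=
    ((L1.integrable_coeFn _).sub (L1.integrable_coeFn _)).norm
  have hi2 : Integrable (fun x => ‖w x - trc M (w x)‖) μI := (hw.sub (trc_int hw.1 M)).norm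
  rw [IndS_dist, ← integral_const_mul, ← integral_add (hi.const_mul _) hi2]
  unfold Phi
  rw [← integral_sub (Phi_int hw F) (Phi_int hw G)]
  refine norm_integral_le_of_norm_le ((hi.const_mul _).add hi2) ?_
  filter_upwards [hF, hG] with x h1 h2
  rw [← sub_mul, ← Complex.ofReal_sub, norm_mul, Complex.norm_real]
  set d := ‖(F : Lp ℝ 1 μI) x - (G : Lp ℝ 1 μI) x‖ with hd
  have hd1 : d ≤ 1 := by
    rw [hd]
    rcases h1 with h1 | h1 <;> rcases h2 with h2 | h2 <;> rw [h1, h2] <;> norm_num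
  have hd0 : 0 ≤ d := norm_nonneg _
  have h3 : ‖w x‖ ≤ M + ‖w x - trc M (w x)‖ := by
    have := norm_add_le (trc M (w x)) (w x - trc M (w x))
    rw [add_sub_cancel] at this
    linarith [trc_norm M (w x)]
  have h4 := norm_nonneg (w x - trc M (w x))
  nlinarith

lemma trc_L1 {f : ℝ → ℂ} (hf : Integrable f μI) : Tendsto (fun N => ∫ x, ‖f x - trc N (f x)‖ ∂μI) atTop (𝓝 0) := by
  have h0 : Tendsto (fun N => ∫ x, ‖f x - trc N (f x)‖ ∂μI) atTop (𝓝 (∫ x, (0:ℝ) ∂μI)) := by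
    refine tendsto_integral_of_dominated_convergence (fun x => ‖f x‖) (fun N => (hf.sub (trc_int hf.1 N)).norm.1) hf.norm ?_ ?_
    · intro N; exact Eventually.of_forall fun x => by rw [norm_norm]; exact trc_sub_norm_le _ _
    · refine Eventually.of_forall fun x => ?_
      refine tendsto_const_nhds.congr' ?_
      filter_upwards [trc_lim (f x)] with N hN
      rw [hN]; simp
  simpa using h0

lemma Phi_cont {w : ℝ → ℂ} (hw : Integrable w μI) : Continuous (Phi w) := by
  rw [Metric.continuous_iff]
  intro G ε hε
  obtain ⟨M, hM⟩ := ((trc_L1 hw).eventually (gt_mem_nhds (half_pos hε))).exists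
  refine ⟨ε / 2 / (M + 1), by positivity, fun F hF => ?_⟩
  rw [dist_eq_norm]
  have h1 := Phi_sub hw F G M
  have h2 : M * dist F G ≤ ε / 2 := by
    rw [lt_div_iff₀ (by positivity)] at hF
    nlinarith [dist_nonneg (x := F) (y := G)]
  linarith

lemma vhs_core {w : ℕ → ℝ → ℂ} (hw : ∀ n, Integrable (w n) μI)
    (hconv : ∀ A, MeasurableSet A → ∃ L, Tendsto (fun n => ∫ x in A, w n x ∂μI) atTop (𝓝 L)) {ε : ℝ} (hε : 0 < ε) :
    ∃ δ : ℝ, 0 < δ ∧ ∀ n E, MeasurableSet E → μI E ≤ ENNReal.ofReal δ → ‖∫ x in E, w n x ∂μI‖ ≤ ε := by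
  set C : ℕ → Set IndS := fun p => {F | ∀ n, p ≤ n → ‖Phi (w n) F - Phi (w p) F‖ ≤ ε / 4} with hC
  have hCc : ∀ p, IsClosed (C p) := by
    intro p
    have : C p = ⋂ n, ⋂ (_ : p ≤ n), {F | ‖Phi (w n) F - Phi (w p) F‖ ≤ ε / 4} := by
      ext F; simp [hC]
    rw [this]
    refine isClosed_iInter fun n => isClosed_iInter fun _ => ?_
    exact isClosed_le ((Phi_cont (hw n)).sub (Phi_cont (hw p))).norm continuous_const
  have hCu : ⋃ p, C p = univ := by
    refine eq_univ_of_forall fun F => ?_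
    obtain ⟨A, hA, rfl⟩ := exists_toS F
    obtain ⟨L, hL⟩ := hconv A hA
    obtain ⟨p, hp⟩ := Metric.cauchySeq_iff'.1 hL.cauchySeq (ε / 4) (by positivity)
    refine mem_iUnion.2 ⟨p, fun n hn => ?_⟩
    rw [Phi_toS, Phi_toS, ← dist_eq_norm]
    exact (hp n hn).le
  haveI : CompleteSpace IndS := IndS_closed.completeSpace_coe
  haveI : Nonempty IndS := ⟨toS MeasurableSet.empty⟩
  obtain ⟨p, F0, hF0⟩ := nonempty_interior_of_iUnion_of_closed hCc hCu
  rw [mem_interior_iff_mem_nhds, Metric.mem_nhds_iff] at hF0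
  obtain ⟨r, hr, hball⟩ := hF0
  obtain ⟨A, hA, rfl⟩ := exists_toS F0
  have h1 : ∀ n, p ≤ n → ∀ E, MeasurableSet E → μI E ≤ ENNReal.ofReal (r / 2) →
      ‖∫ x in E, w n x ∂μI - ∫ x in E, w p x ∂μI‖ ≤ ε / 2 := by
    intro n hn E hE hEm
    have hreal : μI.real E < r := by
      have : μI.real E ≤ r / 2 := ENNReal.toReal_le_of_le_ofReal (by positivity) hEm
      linarith
    have hd : ∀ B (hB : MeasurableSet B), (∀ x, x ∉ E → (x ∈ B ↔ x ∈ A)) → toS hB ∈ C p := by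
      intro B hB hBA
      apply hball
      rw [Metric.mem_ball, IndS_dist]
      refine lt_of_le_of_lt ?_ hreal
      have e : μI.real E = ∫ x, E.indicator (fun _ => (1:ℝ)) x ∂μI := by
        rw [integral_indicator_const _ hE]; simp
      rw [e]
      refine integral_mono_ae ((L1.integrable_coeFn _).sub (L1.integrable_coeFn _)).norm ((integrable_const (1:ℝ)).indicator hE) ?_
      filter_upwards [toS_coe hB, toS_coe hA] with x hx1 hx2
      simp only [hx1, hx2]
      by_cases hxE : x ∈ E
      · rw [indicator_of_mem hxE]
        by_cases hxB : x ∈ B <;> by_cases hxA : x ∈ A <;> simp [hxB, hxA]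
      · rw [indicator_of_notMem hxE]
        have := hBA x hxE
        by_cases hxA : x ∈ A
        · have hxB := this.2 hxA
          simp [hxB, hxA]
        · have hxB : x ∉ B := fun h => hxA (this.1 h)
          simp [hxB, hxA]
    have a1 := hd (A ∪ E) (hA.union hE) (fun x hx => by simp [hx]) n hn
    have a2 := hd (A \ E) (hA.diff hE) (fun x hx => by simp [hx]) n hn
    simp only [Phi_toS] at a1 a2
    have hdec : ∀ m, ∫ x in E, w m x ∂μI = ∫ x in A ∪ E, w m x ∂μI - ∫ x in A \ E, w m x ∂μI := by
      intro m
      have : A ∪ E = (A \ E) ∪ E := by simp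
      rw [this, setIntegral_union disjoint_sdiff_left hE (hw m).integrableOn (hw m).integrableOn]
      ring
    rw [hdec n, hdec p]
    have : ∀ a b c d : ℂ, (a - b) - (c - d) = (a - c) - (b - d) := by intros; ring
    rw [this]
    refine (norm_sub_le _ _).trans ?_
    linarith
  have h2 : ∀ m, ∃ δ : ℝ, 0 < δ ∧ ∀ E, MeasurableSet E → μI E ≤ ENNReal.ofReal δ → ‖∫ x in E, w m x ∂μI‖ ≤ ε / 2 := by
    intro m
    obtain ⟨δ, hδ, h⟩ := abs_cont (hw m).norm (half_pos hε)
    refine ⟨δ, hδ, fun E hE hEm => ?_⟩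
    refine (norm_integral_le_integral_norm _).trans ?_
    rw [← ENNReal.ofReal_le_ofReal_iff (by positivity), ofReal_integral_eq_lintegral_ofReal (hw m).norm.integrableOn (Eventually.of_forall fun _ => norm_nonneg _)]
    exact h E hE hEm
  choose d hd hd2 using h2
  obtain ⟨δ, hδ, hδ2⟩ : ∃ δ : ℝ, 0 < δ ∧ ∀ m ∈ Finset.range (p + 1), δ ≤ d m := by
    refine ⟨(Finset.range (p + 1)).inf' Finset.nonempty_range_add_one d, ?_, fun m hm => Finset.inf'_le _ hm⟩
    exact (Finset.lt_inf'_iff _).2 fun m _ => hd m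
  refine ⟨min δ (r / 2), by positivity, fun n E hE hEm => ?_⟩
  rcases le_total n p with hn | hn
  · have := hd2 n E hE (hEm.trans (ENNReal.ofReal_le_ofReal ((min_le_left _ _).trans (hδ2 n (by simp; omega)))))
    linarith
  · have a1 := hd2 p E hE (hEm.trans (ENNReal.ofReal_le_ofReal ((min_le_left _ _).trans (hδ2 p (by simp)))))
    have a2 := h1 n hn E hE (hEm.trans (ENNReal.ofReal_le_ofReal (min_le_right _ _)))
    have a3 := norm_add_le (∫ x in E, w p x ∂μI) (∫ x in E, w n x ∂μI - ∫ x in E, w p x ∂μI)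
    rw [add_sub_cancel] at a3
    linarith

lemma abs_part {u : ℝ → ℝ} (hu : Integrable u μI) (hum : Measurable u) {δ ε : ℝ}
    (h : ∀ E, MeasurableSet E → μI E ≤ ENNReal.ofReal δ → |∫ x in E, u x ∂μI| ≤ ε) {E : Set ℝ} (hE : MeasurableSet E)
    (hEm : μI E ≤ ENNReal.ofReal δ) : ∫ x in E, |u x| ∂μI ≤ 2 * ε := by
  have hP : MeasurableSet {x | 0 ≤ u x} := measurableSet_le measurable_const hum
  have e := setIntegral_union (μ := μI) (f := fun x => |u x|) (s := E ∩ {x | 0 ≤ u x}) (t := E \ {x | 0 ≤ u x})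
    (disjoint_sdiff_right.mono_left inter_subset_right) (hE.diff hP) hu.abs.integrableOn hu.abs.integrableOn
  rw [inter_union_diff] at e
  have e1 : ∫ x in E ∩ {x | 0 ≤ u x}, |u x| ∂μI = ∫ x in E ∩ {x | 0 ≤ u x}, u x ∂μI :=
    setIntegral_congr_fun (hE.inter hP) fun x hx => abs_of_nonneg hx.2
  have e2 : ∫ x in E \ {x | 0 ≤ u x}, |u x| ∂μI = - ∫ x in E \ {x | 0 ≤ u x}, u x ∂μI := by
    rw [← integral_neg]
    refine setIntegral_congr_fun (hE.diff hP) fun x hx => abs_of_nonpos ?_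
    exact (not_le.1 hx.2).le
  rw [e, e1, e2]
  have b1 := abs_le.1 (h _ (hE.inter hP) ((measure_mono inter_subset_left).trans hEm))
  have b2 := abs_le.1 (h _ (hE.diff hP) ((measure_mono diff_subset).trans hEm))
  linarith

lemma vhs_meas {w : ℕ → ℝ → ℂ} (hw : ∀ n, Integrable (w n) μI) (hm : ∀ n, Measurable (w n))
    (hconv : ∀ A, MeasurableSet A → ∃ L, Tendsto (fun n => ∫ x in A, w n x ∂μI) atTop (𝓝 L)) (ε : ℝ) (hε : 0 < ε) :
    ∃ δ : ℝ, 0 < δ ∧ ∀ n E, MeasurableSet E → μI E ≤ ENNReal.ofReal δ → ∫⁻ x in E, ‖w n x‖ₑ ∂μI ≤ ENNReal.ofReal ε := by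
  obtain ⟨δ, hδ, h⟩ := vhs_core hw hconv (ε := ε / 4) (by positivity)
  refine ⟨δ, hδ, fun n E hE hEm => ?_⟩
  rw [← ofReal_integral_norm_eq_lintegral_enorm (hw n).integrableOn]
  apply ENNReal.ofReal_le_ofReal
  have hre : Integrable (fun x => (w n x).re) μI := (hw n).re
  have him : Integrable (fun x => (w n x).im) μI := (hw n).im
  have a1 := abs_part hre (Complex.measurable_re.comp (hm n)) (δ := δ) (ε := ε / 4) (fun E hE hEm => by
    have e : ∫ x in E, (w n x).re ∂μI = (∫ x in E, w n x ∂μI).re := integral_re (hw n).integrableOn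
    rw [e]
    exact (Complex.abs_re_le_norm _).trans (h n E hE hEm)) hE hEm
  have a2 := abs_part him (Complex.measurable_im.comp (hm n)) (δ := δ) (ε := ε / 4) (fun E hE hEm => by
    have e : ∫ x in E, (w n x).im ∂μI = (∫ x in E, w n x ∂μI).im := integral_im (hw n).integrableOn
    rw [e]
    exact (Complex.abs_im_le_norm _).trans (h n E hE hEm)) hE hEm
  have a3 : ∫ x in E, ‖w n x‖ ∂μI ≤ ∫ x in E, (|(w n x).re| + |(w n x).im|) ∂μI :=
    integral_mono (hw n).norm.integrableOn (hre.abs.integrableOn.add him.abs.integrableOn) fun x => Complex.norm_le_abs_re_add_abs_im _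
  rw [integral_add hre.abs.integrableOn him.abs.integrableOn] at a3
  linarith

lemma vhs {w : ℕ → ℝ → ℂ} {v : ℝ → ℂ} (hw : ∀ n, Integrable (w n) μI)
    (hlim : ∀ᵐ x ∂μI, Tendsto (fun n => w n x) atTop (𝓝 (v x)))
    (hconv : ∀ A, MeasurableSet A → ∃ L, Tendsto (fun n => ∫ x in A, w n x ∂μI) atTop (𝓝 L)) :
    Integrable v μI ∧ Tendsto (fun n => ∫ x, w n x ∂μI) atTop (𝓝 (∫ x, v x ∂μI)) := by
  refine ui_limit hw hlim ?_
  set w' : ℕ → ℝ → ℂ := fun n => (hw n).1.mk (w n) with hw'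
  have hae : ∀ n, w n =ᵐ[μI] w' n := fun n => (hw n).1.ae_eq_mk
  intro ε hε
  obtain ⟨δ, hδ, h⟩ := vhs_meas (w := w') (fun n => (hw n).congr (hae n)) (fun n => (hw n).1.stronglyMeasurable_mk.measurable) (fun A hA => by
    obtain ⟨L, hL⟩ := hconv A hA
    refine ⟨L, hL.congr fun n => ?_⟩
    exact integral_congr_ae (ae_restrict_of_ae (hae n))) ε hε
  refine ⟨δ, hδ, fun n E hE hEm => ?_⟩
  refine le_trans (le_of_eq (lintegral_congr_ae ?_)) (h n E hE hEm)
  filter_upwards [ae_restrict_of_ae (hae n)] with x hx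
  rw [hx]

lemma LlogL_ind {g : ℝ → ℂ} (hg : MemLlogL g) {A : Set ℝ} (hA : MeasurableSet A) : MemLlogL (A.indicator g) := by
  refine ⟨hg.1.indicator hA, ?_⟩
  have h2 : Integrable (fun x => ‖g x‖ * max (Real.log ‖g x‖) 0) μI := hg.2
  refine (h2.indicator hA).congr (Eventually.of_forall fun x => ?_)
  by_cases h : x ∈ A <;> simp [h]

lemma parseval_aux (f g : ℝ → ℂ) (hf : Integrable f μI) (hg : MemLlogL g)
    (hfg : ∀ A : Set ℝ, MeasurableSet A → Integrable (fun x => f x * FHT (A.indicator g) x) μI) :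
    Integrable (fun x => g x * FHT f x) μI ∧
    ∫ x, f x * FHT g x ∂μI = - ∫ x, g x * FHT f x ∂μI := by
  obtain ⟨n, hn, hlim⟩ := FHT_trunc hf
  have hnt : Tendsto n atTop atTop := tendsto_atTop_mono hn tendsto_id
  have hP : ∀ k, ∀ A : Set ℝ, MeasurableSet A → _ := fun k A hA =>
    parseval_bdd (trc_int hf.1 (n k)).1 (n k) (fun x => trc_norm (n k) (f x)) (LlogL_ind hg hA)
  have hset : ∀ A : Set ℝ, MeasurableSet A → Tendsto (fun k => ∫ x in A, g x * FHT (fun x => trc (n k) (f x)) x ∂μI) atTop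
      (𝓝 (- ∫ x, f x * FHT (A.indicator g) x ∂μI)) := by
    intro A hA
    have h1 : Tendsto (fun k => ∫ x, trc (n k) (f x) * FHT (A.indicator g) x ∂μI) atTop (𝓝 (∫ x, f x * FHT (A.indicator g) x ∂μI)) := by
      refine tendsto_integral_of_dominated_convergence (fun x => ‖f x * FHT (A.indicator g) x‖) (fun k => ?_) (hfg A hA).norm
        (fun k => Eventually.of_forall fun x => ?_) (Eventually.of_forall fun x => ?_)
      · exact (trc_int hf.1 (n k)).1.mul (FHT_meas (LlogL_int (LlogL_ind hg hA)))
      · rw [norm_mul, norm_mul]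
        exact mul_le_mul_of_nonneg_right (trc_norm_le _ _) (norm_nonneg _)
      · refine tendsto_const_nhds.congr' ?_
        filter_upwards [hnt.eventually (trc_lim (f x))] with k hk
        rw [hk]
    refine h1.neg.congr fun k => ?_
    rw [(hP k A hA).2, neg_neg, ← integral_indicator hA]
    congr 1; ext x
    by_cases h : x ∈ A <;> simp [h]
  have hw : ∀ k, Integrable (fun x => g x * FHT (fun x => trc (n k) (f x)) x) μI := by
    intro k
    have := (hP k univ MeasurableSet.univ).1
    simpa only [indicator_univ] using this
  have hV := vhs hw (v := fun x => g x * FHT f x) (by filter_upwards [hlim] with x hx using hx.const_mul _)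
    (fun A hA => ⟨_, hset A hA⟩)
  refine ⟨hV.1, ?_⟩
  have h2 := hset univ MeasurableSet.univ
  simp only [indicator_univ, Measure.restrict_univ] at h2
  rw [← tendsto_nhds_unique h2 hV.2, neg_neg]

/-- Parseval formula: if `f ∈ L¹(-1,1)`, `g ∈ L log L(-1,1)` and `f·T(gχ_A) ∈ L¹` for every
Borel set `A`, then `g·T(f) ∈ L¹` and `∫ f T(g) = -∫ g T(f)`. -/
theorem parseval_LlogL (f g : ℝ → ℂ)
    (hf : IntegrableOn f (Set.Ioo (-1 : ℝ) 1))
    (hg : MemLlogL g)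
    (hfg : ∀ A : Set ℝ, MeasurableSet A →
      IntegrableOn (fun x => f x * FHT (A.indicator g) x) (Set.Ioo (-1 : ℝ) 1)) :
    IntegrableOn (fun x => g x * FHT f x) (Set.Ioo (-1 : ℝ) 1) ∧
    ∫ x in Set.Ioo (-1 : ℝ) 1, f x * FHT g x
      = - ∫ x in Set.Ioo (-1 : ℝ) 1, g x * FHT f x := by
  exact parseval_aux f g hf hg hfg
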